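/- arXiv:2103.16186 — 6 statements merged into one kernel-verified Lean document; each statement's English description precedes it below -/
import Mathlib

section
/- Fix 1 ≤ p ≤ ∞ with p ≠ 2, and set c_p := 2/p − 1 (with c_∞ := −1). Then there exists ε₀ > 0 such that for every 0 < ε < ε₀ one has the strict inequality ‖c_p ε z̄ + 1 + ε z‖_p < ‖1 + ε z‖_p, where the norms are of the functions z ↦ c_p ε z̄ + 1 + ε z and z ↦ 1 + ε z on 𝕋. -/
open MeasureTheory
open scoped ENNReal

noncomputable section

lemma wtl_taylor (q η : ℝ) (hη : 0 < η) : ∃ r : ℝ, 0 < r ∧ ∀ s : ℝ, |s| < r →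
    |(1 + s) ^ q - 1 - q * s - q * (q - 1) / 2 * s ^ 2| ≤ η * s ^ 2 := by
  have h1 : HasDerivAt (fun s : ℝ => q * ((1 + s) ^ (q - 1) - 1 - (q - 1) * s)) 0 0 := by
    have ha : HasDerivAt (fun s : ℝ => 1 + s) 1 0 := (hasDerivAt_id (0 : ℝ)).const_add 1
    have := ((((ha.rpow_const (p := q - 1) (by simp)).sub_const 1).sub
      ((hasDerivAt_id (0 : ℝ)).const_mul (q - 1))).const_mul q)
    exact this.congr_deriv (by simp)
  have h2 := (hasDerivAt_iff_isLittleO.1 h1).def hη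
  rw [Metric.eventually_nhds_iff] at h2
  obtain ⟨r, hr, h2⟩ := h2
  refine ⟨min r (1/2), by positivity, fun s hs => ?_⟩
  have hsr : |s| < r := lt_of_lt_of_le hs (min_le_left _ _)
  have hs2 : |s| < 1/2 := lt_of_lt_of_le hs (min_le_right _ _)
  have key := (convex_Icc (-|s|) |s|).norm_image_sub_le_of_norm_hasDerivWithin_le
    (f := fun s : ℝ => (1 + s) ^ q - 1 - q * s - q * (q - 1) / 2 * s ^ 2)
    (f' := fun s : ℝ => q * ((1 + s) ^ (q - 1) - 1 - (q - 1) * s)) (C := η * |s|)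
    (x := 0) (y := s) ?_ ?_ ?_ ?_
  · simpa [mul_assoc, ← sq] using key
  · intro t ht
    have hts : |t| ≤ |s| := abs_le.2 ht
    have ha : HasDerivAt (fun s : ℝ => 1 + s) 1 t := (hasDerivAt_id t).const_add 1
    have hne : 1 + t ≠ 0 := by
      have := neg_abs_le t
      intro h; linarith
    have := ((((ha.rpow_const (p := q) (Or.inl hne)).sub_const 1).sub
      ((hasDerivAt_id t).const_mul q)).sub
      ((hasDerivAt_pow 2 t).const_mul (q * (q - 1) / 2)))
    refine HasDerivAt.hasDerivWithinAt ?_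
    exact this.congr_deriv (by norm_num; ring)
  · intro t ht
    have hts : |t| ≤ |s| := abs_le.2 ht
    have := h2 (y := t) (by simpa using lt_of_le_of_lt hts hsr)
    simp at this
    rw [Real.norm_eq_abs, abs_mul]
    exact this.trans (by gcongr)
  · simp
  · exact ⟨neg_abs_le s, le_abs_self s⟩

/-- squared modulus minus one -/
def wtlS (c ε X : ℝ) : ℝ := 2 * ε * (1 + c) * X + ε ^ 2 * ((1 - c) ^ 2 + 4 * c * X ^ 2)

def wtlM (q c ε X : ℝ) : ℝ := 1 + q * wtlS c ε X + 2 * q * (q - 1) * (ε ^ 2 * (1 + c) ^ 2 * X ^ 2)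

lemma wtl_pointwise (q c δ : ℝ) (hδ : 0 < δ) : ∃ ε₀ : ℝ, 0 < ε₀ ∧ ∀ ε : ℝ, 0 < ε → ε < ε₀ →
    ∀ X : ℝ, |X| ≤ 1 → |(1 + wtlS c ε X) ^ q - wtlM q c ε X| ≤ δ * ε ^ 2 := by
  set A : ℝ := 2 * |1 + c| with hA
  set E : ℝ := (1 - c) ^ 2 + 4 * |c| with hE
  have hA0 : 0 ≤ A := by positivity
  have hE0 : 0 ≤ E := by positivity
  set C : ℝ := A + E + 1 with hC
  have hC0 : 0 < C := by positivity
  set K : ℝ := |q * (q - 1) / 2| with hK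
  set D : ℝ := K * (2 * A * E + E ^ 2) + 1 with hD
  have hD0 : 0 < D := by positivity
  obtain ⟨r, hr, H⟩ := wtl_taylor q (δ / 2 / C ^ 2) (by positivity)
  refine ⟨min 1 (min (r / C) (δ / 2 / D)), by positivity, fun ε hε hlt X hX => ?_⟩
  have e1 : ε < 1 := lt_of_lt_of_le hlt (min_le_left _ _)
  have e2 : ε < r / C := lt_of_lt_of_le hlt ((min_le_right _ _).trans (min_le_left _ _))
  have e3 : ε < δ / 2 / D := lt_of_lt_of_le hlt ((min_le_right _ _).trans (min_le_right _ _))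
  rw [lt_div_iff₀ hC0] at e2
  rw [lt_div_iff₀ hD0] at e3
  set U : ℝ := 2 * (1 + c) * X with hU
  set B : ℝ := (1 - c) ^ 2 + 4 * c * X ^ 2 with hB
  have hUA : |U| ≤ A := by
    rw [hU, abs_mul, abs_mul, abs_two]
    exact mul_le_of_le_one_right (by positivity) hX
  have hBE : |B| ≤ E := by
    refine (abs_add_le _ _).trans ?_
    rw [abs_of_nonneg (sq_nonneg (1 - c)), abs_mul, abs_mul, abs_pow]
    have : |X| ^ 2 ≤ 1 := pow_le_one₀ (abs_nonneg _) hX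
    have h4 : |(4 : ℝ)| = 4 := by norm_num
    rw [h4, hE]
    have : 4 * |c| * |X| ^ 2 ≤ 4 * |c| := mul_le_of_le_one_right (by positivity) this
    linarith
  have hS : wtlS c ε X = ε * (U + ε * B) := by simp only [wtlS, hU, hB]; ring
  clear_value U B
  have hSb : |wtlS c ε X| ≤ ε * C := by
    rw [hS, abs_mul, abs_of_pos hε]
    gcongr
    refine (abs_add_le _ _).trans ?_
    rw [abs_mul, abs_of_pos hε]
    have : ε * |B| ≤ 1 * E := by gcongr
    linarith
  have h1 := H (wtlS c ε X) (by linarith)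
  have h1' : δ / 2 / C ^ 2 * wtlS c ε X ^ 2 ≤ δ / 2 * ε ^ 2 := by
    have : wtlS c ε X ^ 2 ≤ (ε * C) ^ 2 := by
      rw [← sq_abs]; gcongr
    calc _ ≤ δ / 2 / C ^ 2 * (ε * C) ^ 2 := by gcongr
      _ = _ := by field_simp
  have h2 : |q * (q - 1) / 2 * (ε ^ 3 * (2 * U * B + ε * B ^ 2))| ≤ δ / 2 * ε ^ 2 := by
    have : |2 * U * B + ε * B ^ 2| ≤ 2 * A * E + E ^ 2 := by
      refine (abs_add_le _ _).trans ?_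
      rw [abs_mul, abs_mul, abs_mul, abs_two, abs_of_pos hε, abs_pow]
      have : ε * |B| ^ 2 ≤ 1 * E ^ 2 := by gcongr
      have : 2 * |U| * |B| ≤ 2 * A * E := by gcongr
      linarith
    rw [abs_mul, abs_mul, abs_of_pos (pow_pos hε 3)]
    calc _ ≤ K * (ε ^ 3 * (2 * A * E + E ^ 2)) := by gcongr
      _ = (ε * (D - 1)) * ε ^ 2 := by rw [hD]; ring
      _ ≤ _ := by gcongr; linarith
  have : (1 + wtlS c ε X) ^ q - wtlM q c ε X =
      ((1 + wtlS c ε X) ^ q - 1 - q * wtlS c ε X - q * (q - 1) / 2 * wtlS c ε X ^ 2)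
      + q * (q - 1) / 2 * (ε ^ 3 * (2 * U * B + ε * B ^ 2)) := by
    rw [wtlM]
    have : wtlS c ε X ^ 2 = ε ^ 2 * U ^ 2 + ε ^ 3 * (2 * U * B + ε * B ^ 2) := by rw [hS]; ring
    rw [this, hU]; ring
  rw [this]
  refine (abs_add_le _ _).trans ?_
  linarith

def wtlf (c ε : ℝ) : AddCircle (1 : ℝ) → ℂ := fun x =>
  (c : ℂ) * (ε : ℂ) * fourier (-1) x + 1 + (ε : ℂ) * fourier 1 x

lemma wtlf_cont (c ε : ℝ) : Continuous (wtlf c ε) := by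
  unfold wtlf; fun_prop

def wtlX (x : AddCircle (1 : ℝ)) : ℝ := (fourier 1 x : ℂ).re

lemma wtlX_cont : Continuous wtlX := by
  unfold wtlX; fun_prop

lemma wtl_norm1 (n : ℤ) (x : AddCircle (1 : ℝ)) : ‖(fourier n x : ℂ)‖ = 1 := by
  rw [fourier_apply]; exact Circle.norm_coe _

lemma wtlX_le (x) : |wtlX x| ≤ 1 :=
  (Complex.abs_re_le_norm _).trans (wtl_norm1 1 x).le

lemma wtlf_sq (c ε : ℝ) (x) : ‖wtlf c ε x‖ ^ 2 = 1 + wtlS c ε (wtlX x) := by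
  have h := wtl_norm1 1 x
  have h2 : (fourier 1 x : ℂ).re ^ 2 + (fourier 1 x : ℂ).im ^ 2 = 1 := by
    have : ‖(fourier 1 x : ℂ)‖ ^ 2 = 1 := by rw [h]; norm_num
    rw [← Complex.normSq_eq_norm_sq, Complex.normSq_apply] at this
    linarith
  rw [← Complex.normSq_eq_norm_sq, Complex.normSq_apply]
  simp only [wtlf, wtlS, wtlX, fourier_neg]
  simp
  simp at h2
  linear_combination (ε ^ 2 * (1 - c) ^ 2) * h2

lemma wtl_int_fourier (n : ℤ) (hn : n ≠ 0) :
    ∫ x : AddCircle (1 : ℝ), (fourier n x : ℂ) = 0 :=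
  integral_eq_zero_of_add_right_eq_neg (fourier_add_half_inv_index hn (by norm_num))

lemma wtl_integrable {E : Type*} [NormedAddCommGroup E] {f : AddCircle (1 : ℝ) → E}
    (hf : Continuous f) : Integrable f :=
  hf.integrable_of_hasCompactSupport (HasCompactSupport.of_compactSpace f)

lemma wtl_int_re (n : ℤ) (hn : n ≠ 0) :
    ∫ x : AddCircle (1 : ℝ), (fourier n x : ℂ).re = 0 := by
  have := integral_re (𝕜 := ℂ) (wtl_integrable (f := fun x : AddCircle (1 : ℝ) => (fourier n x : ℂ))
    (by fun_prop))
  rw [wtl_int_fourier n hn] at this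
  simpa using this

lemma wtl_vol : (volume : Measure (AddCircle (1 : ℝ))).real Set.univ = 1 := by
  simp [Measure.real, AddCircle.measure_univ]

lemma wtl_intX2 : ∫ x, wtlX x ^ 2 = 1 / 2 := by
  have h : ∀ x, wtlX x ^ 2 = 1 / 2 + 1 / 2 * (fourier 2 x : ℂ).re := by
    intro x
    have h := wtl_norm1 1 x
    have h2 : (fourier 1 x : ℂ).re ^ 2 + (fourier 1 x : ℂ).im ^ 2 = 1 := by
      have : ‖(fourier 1 x : ℂ)‖ ^ 2 = 1 := by rw [h]; norm_num
      rw [← Complex.normSq_eq_norm_sq, Complex.normSq_apply] at this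
      linarith
    have h3 : (fourier 2 x : ℂ) = fourier 1 x * fourier 1 x := by
      rw [← fourier_add]; norm_num
    rw [h3, wtlX, Complex.mul_re]
    linarith
  simp_rw [h]
  rw [integral_add (integrable_const _) (wtl_integrable (by fun_prop)), integral_const_mul,
    wtl_int_re 2 (by norm_num), integral_const, wtl_vol]
  norm_num

lemma wtl_intM (q c ε : ℝ) : ∫ x, wtlM q c ε (wtlX x) =
    1 + ε ^ 2 * (q * (1 + c ^ 2) + q * (q - 1) * (1 + c) ^ 2) := by
  have hc := wtlX_cont
  have h : ∀ x, wtlM q c ε (wtlX x) = (1 + q * ε ^ 2 * (1 - c) ^ 2) +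
      (2 * q * ε * (1 + c) * wtlX x +
      (q * ε ^ 2 * 4 * c + 2 * q * (q - 1) * ε ^ 2 * (1 + c) ^ 2) * wtlX x ^ 2) := by
    intro x; simp only [wtlM, wtlS]; ring
  have key : ∀ u v w : ℝ, ∫ x, (u + (v * wtlX x + w * wtlX x ^ 2)) = u + w * (1 / 2) := by
    intro u v w
    rw [integral_add (integrable_const _) (wtl_integrable (by fun_prop)),
      integral_add (wtl_integrable (by fun_prop)) (wtl_integrable (by fun_prop)),
      integral_const_mul, integral_const_mul, wtl_intX2, integral_const, wtl_vol]
    have : ∫ x, wtlX x = 0 := wtl_int_re 1 (by norm_num)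
    rw [this, smul_eq_mul]; ring
  simp_rw [h]
  rw [key]; ring

lemma wtl_int (P c δ : ℝ) (hP : 0 < P) (hδ : 0 < δ) : ∃ ε₀ : ℝ, 0 < ε₀ ∧ ∀ ε : ℝ, 0 < ε → ε < ε₀ →
    |(∫ x, ‖wtlf c ε x‖ ^ P) -
      (1 + ε ^ 2 * (P / 2 * (1 + c ^ 2) + P / 2 * (P / 2 - 1) * (1 + c) ^ 2))| ≤ δ * ε ^ 2 := by
  obtain ⟨ε₀, h0, H⟩ := wtl_pointwise (P / 2) c δ hδ
  refine ⟨ε₀, h0, fun ε hε hlt => ?_⟩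
  have hc := wtlX_cont
  have hf := wtlf_cont c ε
  rw [← wtl_intM, ← integral_sub]
  · have := norm_integral_le_of_norm_le_const (μ := (volume : Measure (AddCircle (1 : ℝ))))
      (f := fun x => ‖wtlf c ε x‖ ^ P - wtlM (P / 2) c ε (wtlX x)) (C := δ * ε ^ 2) ?_
    · rw [wtl_vol, mul_one] at this
      exact this
    · refine Filter.Eventually.of_forall fun x => ?_
      have e : ‖wtlf c ε x‖ ^ P = (1 + wtlS c ε (wtlX x)) ^ (P / 2) := by
        rw [← wtlf_sq, ← Real.rpow_natCast, ← Real.rpow_mul (norm_nonneg _)]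
        congr 1; push_cast; ring
      rw [e]
      exact H ε hε hlt _ (wtlX_le x)
  · exact wtl_integrable (hf.norm.rpow_const fun _ => Or.inr hP.le)
  · apply wtl_integrable
    unfold wtlM wtlS
    fun_prop

lemma wtl_eLp (p : ℝ≥0∞) (h0 : p ≠ 0) (ht : p ≠ ∞) (c ε : ℝ) : eLpNorm (wtlf c ε) p volume =
    ENNReal.ofReal ((∫ x, ‖wtlf c ε x‖ ^ p.toReal) ^ p.toReal⁻¹) := by
  refine MemLp.eLpNorm_eq_integral_rpow_norm h0 ht ?_
  exact (wtlf_cont c ε).memLp_of_hasCompactSupport (HasCompactSupport.of_compactSpace _)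

lemma wtl_fin (p : ℝ≥0∞) (hp1 : 1 ≤ p) (hp2 : p ≠ 2) (ht : p ≠ ∞) :
    ∃ ε₀ : ℝ, 0 < ε₀ ∧ ∀ ε : ℝ, 0 < ε → ε < ε₀ →
      eLpNorm (wtlf (2 / p.toReal - 1) ε) p volume < eLpNorm (wtlf 0 ε) p volume := by
  have h0 : p ≠ 0 := by rintro rfl; simp at hp1
  have hP : 0 < p.toReal := ENNReal.toReal_pos h0 ht
  have hP2 : p.toReal ≠ 2 := by
    intro h; apply hp2
    rw [← ENNReal.ofReal_toReal ht, h]; simp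
  simp_rw [wtl_eLp p h0 ht]
  generalize p.toReal = P at *
  set γ : ℝ := (P / 2) ^ 2 * (1 - 2 / P) ^ 2 with hγ
  have hγ0 : 0 < γ := by
    have : 1 - 2 / P ≠ 0 := by
      intro h; apply hP2; field_simp at h; linarith
    positivity
  obtain ⟨e1, he1, H1⟩ := wtl_int P (2 / P - 1) (γ / 3) hP (by positivity)
  obtain ⟨e2, he2, H2⟩ := wtl_int P 0 (γ / 3) hP (by positivity)
  refine ⟨min e1 e2, by positivity, fun ε hε hlt => ?_⟩
  have a1 := (abs_le.1 (H1 ε hε (hlt.trans_le (min_le_left _ _)))).2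
  have a2 := (abs_le.1 (H2 ε hε (hlt.trans_le (min_le_right _ _)))).1
  have id : ε ^ 2 * (P / 2 * (1 + 0 ^ 2) + P / 2 * (P / 2 - 1) * (1 + 0) ^ 2) -
    ε ^ 2 * (P / 2 * (1 + (2 / P - 1) ^ 2) + P / 2 * (P / 2 - 1) * (1 + (2 / P - 1)) ^ 2)
      = γ * ε ^ 2 := by
    rw [hγ]; field_simp; ring
  have hg : 0 < γ * ε ^ 2 := by positivity
  have hlt2 : (∫ x, ‖wtlf (2 / P - 1) ε x‖ ^ P) < ∫ x, ‖wtlf 0 ε x‖ ^ P := by linarith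
  have hnn : 0 ≤ ∫ x, ‖wtlf (2 / P - 1) ε x‖ ^ P := integral_nonneg fun x => by positivity
  have hr := Real.rpow_lt_rpow hnn hlt2 (inv_pos.2 hP)
  exact (ENNReal.ofReal_lt_ofReal_iff (lt_of_le_of_lt (by positivity) hr)).2 hr

lemma wtl_inf : ∃ ε₀ : ℝ, 0 < ε₀ ∧ ∀ ε : ℝ, 0 < ε → ε < ε₀ →
      eLpNorm (wtlf (-1) ε) ∞ volume < eLpNorm (wtlf 0 ε) ∞ volume := by
  refine ⟨1 / 2, by norm_num, fun ε hε hlt => ?_⟩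
  obtain ⟨t, ht1, ht2⟩ := exists_between (show Real.sqrt (1 + 4 * ε ^ 2) < 1 + ε by
    rw [Real.sqrt_lt' (by positivity)]; nlinarith)
  have ht0 : 0 ≤ t := (Real.sqrt_nonneg _).trans ht1.le
  have b1 : eLpNorm (wtlf (-1) ε) ∞ volume ≤ ENNReal.ofReal (Real.sqrt (1 + 4 * ε ^ 2)) := by
    rw [eLpNorm_exponent_top]
    refine eLpNormEssSup_le_of_ae_bound (Filter.Eventually.of_forall fun x => ?_)
    apply Real.le_sqrt_of_sq_le
    rw [wtlf_sq, wtlS]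
    nlinarith [mul_nonneg (sq_nonneg ε) (sq_nonneg (wtlX x))]
  have b2 : ENNReal.ofReal t ≤ eLpNorm (wtlf 0 ε) ∞ volume := by
    by_contra hcon
    push Not at hcon
    rw [eLpNorm_exponent_top] at hcon
    have hae := ae_lt_of_essSup_lt hcon
    have ho : IsOpen {x | t < ‖wtlf 0 ε x‖} := isOpen_lt continuous_const (wtlf_cont 0 ε).norm
    have hne : ({x | t < ‖wtlf 0 ε x‖}).Nonempty := by
      refine ⟨0, ?_⟩
      have : wtlf 0 ε 0 = ((1 + ε : ℝ) : ℂ) := by simp [wtlf]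
      rw [Set.mem_ofPred_eq, this, Complex.norm_real, Real.norm_of_nonneg (by positivity)]
      exact ht2
    refine (ho.measure_pos volume hne).ne' ?_
    refine measure_mono_null ?_ (ae_iff.1 hae)
    intro x hx
    simp only [Set.mem_ofPred_eq, not_lt] at hx ⊢
    rw [← ofReal_norm]
    exact ENNReal.ofReal_le_ofReal hx.le
  refine b1.trans_lt (lt_of_lt_of_le ?_ b2)
  exact (ENNReal.ofReal_lt_ofReal_iff (lt_of_le_of_lt (Real.sqrt_nonneg _) ht1)).2 ht1

/-- Lemma 2.3: for `1 ≤ p ≤ ∞`, `p ≠ 2` and `c_p = 2/p - 1` (with `c_∞ = -1`; note that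
`2 / p.toReal - 1 = -1` when `p = ∞`), one has
`‖c_p ε z̄ + 1 + ε z‖_p < ‖1 + ε z‖_p` for all sufficiently small `ε > 0`. -/
theorem wiener_type_lemma (p : ℝ≥0∞) (hp1 : 1 ≤ p) (hp2 : p ≠ 2) :
    ∃ ε₀ : ℝ, 0 < ε₀ ∧ ∀ ε : ℝ, 0 < ε → ε < ε₀ →
      eLpNorm (fun x : AddCircle (1 : ℝ) =>
          ((2 / p.toReal - 1 : ℝ) : ℂ) * (ε : ℂ) * fourier (-1) x
            + 1 + (ε : ℂ) * fourier 1 x) p volume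
        < eLpNorm (fun x : AddCircle (1 : ℝ) => 1 + (ε : ℂ) * fourier 1 x) p volume := by
  have h0 : ∀ ε : ℝ, (fun x : AddCircle (1 : ℝ) => 1 + (ε : ℂ) * fourier 1 x) = wtlf 0 ε := by
    intro ε; funext x; simp [wtlf]
  simp_rw [h0]
  by_cases ht : p = ∞
  · subst ht
    have h := wtl_inf
    have e : (2 / (∞ : ℝ≥0∞).toReal - 1 : ℝ) = -1 := by simp
    rw [e]
    exact h
  · exact wtl_fin p hp1 hp2 ht

end
end

section
/- Fix 1 ≤ p < ∞ with p ≠ 2, and set c_p := 1 − p/2. Then there exists ε₀ > 0 such that for every 0 < ε < ε₀ one has the strict inequality ‖1 + ε(z₁ + z₂) + c_p ε² z₁z₂‖_p < ‖1 + ε(z₁ + z₂)‖_p, where the norms are of the corresponding functions of (z₁, z₂) on 𝕋². -/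
open MeasureTheory
open scoped ENNReal
noncomputable section

abbrev PX := Fin 2 → AddCircle (1 : ℝ)

instance probCirc : IsProbabilityMeasure (volume : Measure (AddCircle (1:ℝ))) :=
  ⟨by simp [AddCircle.measure_univ]⟩

instance probPX : IsProbabilityMeasure (volume : Measure PX) := by
  rw [volume_pi]; infer_instance

lemma choose_two_formula (s : ℂ) : Ring.choose s 2 = s * (s - 1) / 2 := by
  have h := Ring.descPochhammer_eq_factorial_smul_choose s 2
  simp [descPochhammer_succ_right, Polynomial.smeval_mul, Polynomial.smeval_sub,
    nsmul_eq_mul, Nat.factorial] at h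
  linear_combination -h / 2

lemma taylor5 (s : ℂ) : ∃ c3 c4 : ℂ, ∃ C δ : ℝ, 0 ≤ C ∧ 0 < δ ∧ ∀ u : ℂ, ‖u‖ < δ →
    ‖(1 + u) ^ s - (1 + s * u + s * (s - 1) / 2 * u ^ 2 + c3 * u ^ 3 + c4 * u ^ 4)‖
      ≤ C * ‖u‖ ^ 5 := by
  have h := (Complex.one_add_cpow_hasFPowerSeriesAt_zero (a := s)).isBigO_sub_partialSum_pow 5
  obtain ⟨C, hC, hb⟩ := h.exists_nonneg
  rw [Asymptotics.isBigOWith_iff, Metric.eventually_nhds_iff] at hb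
  obtain ⟨δ, hδ, hb⟩ := hb
  refine ⟨Ring.choose s 3, Ring.choose s 4, C, δ, hC, hδ, fun u hu => ?_⟩
  have := hb (y := u) (by simpa using hu)
  simp [FormalMultilinearSeries.partialSum, Finset.sum_range_succ, binomialSeries_apply, choose_two_formula,
    -FormalMultilinearSeries.apply_eq_prod_smul_coeff] at this
  convert this using 3

lemma fourier_one_add (x t : AddCircle (1:ℝ)) :
    (fourier 1 (x + t) : ℂ) = fourier 1 t * fourier 1 x := by
  simp [fourier_apply, AddCircle.toCircle_add, mul_comm]

lemma ortho2 (f g : PX → ℂ) (j k : ℕ) (hjk : j ≠ k)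
    (hf : ∀ z t, f (fun i => z i + t) = (fourier 1 t : ℂ) ^ j * f z)
    (hg : ∀ z t, g (fun i => z i + t) = (fourier 1 t : ℂ) ^ k * g z) :
    ∫ z, f z * (starRingEnd ℂ) (g z) = 0 := by
  have hne : ((j : ℂ) - k) ≠ 0 := by
    rw [sub_ne_zero]; exact_mod_cast hjk
  set t : AddCircle (1:ℝ) := ((1 / (2 * ((j:ℝ) - k)) : ℝ) : AddCircle (1:ℝ)) with ht
  have h1 : (fourier 1 t : ℂ) ^ j * (starRingEnd ℂ) ((fourier 1 t : ℂ) ^ k) = -1 := by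
    rw [ht, fourier_coe_apply, ← Complex.exp_nat_mul, ← Complex.exp_nat_mul, ← Complex.exp_conj,
      ← Complex.exp_add, ← Complex.exp_pi_mul_I]
    congr 1
    simp
    field_simp
    ring
  have h2 := integral_add_right_eq_self (μ := (volume : Measure PX))
    (fun z => f z * (starRingEnd ℂ) (g z)) (fun _ => t)
  have h3 : ∀ z : PX, f (z + fun _ => t) * (starRingEnd ℂ) (g (z + fun _ => t))
      = - (f z * (starRingEnd ℂ) (g z)) := by
    intro z
    have e1 := hf z t
    have e2 := hg z t
    change f (z + fun _ => t) = _ at e1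
    change g (z + fun _ => t) = _ at e2
    rw [e1, e2, map_mul]
    linear_combination (f z * (starRingEnd ℂ) (g z)) * h1
  simp only [h3, integral_neg] at h2
  have h4 : (2:ℂ) * ∫ z, f z * (starRingEnd ℂ) (g z) = 0 := by linear_combination -h2
  simpa using h4

lemma ortho (q : ℕ → PX → ℂ) (hc : ∀ n, Continuous (q n))
    (hq : ∀ n z t, q n (fun i => z i + t) = (fourier 1 t : ℂ) ^ n * q n z) (N : ℕ) :
    ∫ z, ‖∑ n ∈ Finset.range N, q n z‖ ^ 2 = ∑ n ∈ Finset.range N, ∫ z, ‖q n z‖ ^ 2 := by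
  have hI : ∀ j k, Integrable (fun z => q j z * (starRingEnd ℂ) (q k z)) volume := fun j k =>
    Continuous.integrable_of_hasCompactSupport
      ((hc j).mul (Complex.continuous_conj.comp (hc k))) (HasCompactSupport.of_compactSpace _)
  have e : ∀ w : ℂ, (((‖w‖ ^ 2 : ℝ)) : ℂ) = w * (starRingEnd ℂ) w := fun w => by
    rw [Complex.mul_conj, Complex.normSq_eq_norm_sq]
  have e2 : ∀ f : PX → ℂ, ((∫ z, ‖f z‖ ^ 2 : ℝ) : ℂ) = ∫ z, f z * (starRingEnd ℂ) (f z) := by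
    intro f
    rw [← integral_complex_ofReal]
    simp only [e]
  apply Complex.ofReal_injective
  rw [Complex.ofReal_sum, e2 (fun z => ∑ n ∈ Finset.range N, q n z)]
  simp only [e2, map_sum, Finset.sum_mul_sum]
  rw [integral_finsetSum _ (fun j _ => integrable_finsetSum _ (fun k _ => hI j k))]
  refine Finset.sum_congr rfl fun j hj => ?_
  rw [integral_finsetSum _ (fun k _ => hI j k)]
  rw [Finset.sum_eq_single j]
  · intro k _ hk
    exact ortho2 _ _ j k hk.symm (hq j) (hq k)
  · intro h; exact absurd hj h

lemma cont_integrable {f : PX → ℝ} (hf : Continuous f) : Integrable f volume :=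
  hf.integrable_of_hasCompactSupport (HasCompactSupport.of_compactSpace _)

def PA (z : PX) : ℂ := fourier 1 (z 0) + fourier 1 (z 1)
def PB (z : PX) : ℂ := fourier 1 (z 0) * fourier 1 (z 1)

lemma contA : Continuous PA := by unfold PA; fun_prop
lemma contB : Continuous PB := by unfold PB; fun_prop

lemma shiftA (z : PX) (t : AddCircle (1:ℝ)) :
    PA (fun i => z i + t) = fourier 1 t * PA z := by
  simp only [PA, fourier_one_add]; ring
lemma shiftB (z : PX) (t : AddCircle (1:ℝ)) :
    PB (fun i => z i + t) = (fourier 1 t : ℂ) ^ 2 * PB z := by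
  simp only [PB, fourier_one_add]; ring

def qq (s c c3 c4 : ℂ) : ℕ → PX → ℂ
  | 0, _ => 1
  | 1, z => s * PA z
  | 2, z => s * c * PB z + s * (s - 1) / 2 * PA z ^ 2
  | 3, z => s * (s - 1) / 2 * (2 * c * PA z * PB z) + c3 * PA z ^ 3
  | 4, z => s * (s - 1) / 2 * (c * PB z) ^ 2 + c3 * (3 * PA z ^ 2 * (c * PB z)) + c4 * PA z ^ 4
  | _, _ => 0

lemma qq_cont (s c c3 c4 : ℂ) (n : ℕ) : Continuous (qq s c c3 c4 n) := by
  have := contA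
  have := contB
  rcases n with _ | _ | _ | _ | _ | n <;> unfold qq <;> fun_prop

lemma qq_shift (s c c3 c4 : ℂ) (n : ℕ) (z : PX) (t : AddCircle (1:ℝ)) :
    qq s c c3 c4 n (fun i => z i + t) = (fourier 1 t : ℂ) ^ n * qq s c c3 c4 n z := by
  rcases n with _ | _ | _ | _ | _ | n <;> simp only [qq, shiftA, shiftB] <;> ring

lemma asymp (s c : ℝ) (hs : 0 ≤ s) : ∃ M δ : ℝ, 0 < δ ∧ ∀ ε : ℝ, 0 < ε → ε < δ →
    |(∫ z, ‖1 + (ε : ℂ) * PA z + (c : ℂ) * (ε : ℂ) ^ 2 * PB z‖ ^ (2 * s))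
      - (1 + ε ^ 2 * (∫ z, ‖(s : ℂ) * PA z‖ ^ 2)
        + ε ^ 4 * ∫ z, ‖(s : ℂ) * c * PB z + (s : ℂ) * (s - 1) / 2 * PA z ^ 2‖ ^ 2)|
      ≤ M * ε ^ 5 := by
  obtain ⟨c3, c4, C, δ, hC, hδ, ht⟩ := taylor5 (s : ℂ)
  have hA := contA
  have hB := contB
  set q := qq s c c3 c4 with hq
  have hqc : ∀ n, Continuous (q n) := qq_cont _ _ _ _
  -- remainder polynomial
  let T : ℝ × PX → ℂ := fun y =>
    c3 * (3 * PA y.2 * (c * PB y.2) ^ 2) + c4 * (4 * PA y.2 ^ 3 * (c * PB y.2))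
    + (y.1 : ℂ) * (c3 * (c * PB y.2) ^ 3 + c4 * (6 * PA y.2 ^ 2 * (c * PB y.2) ^ 2))
    + (y.1 : ℂ) ^ 2 * (c4 * (4 * PA y.2 * (c * PB y.2) ^ 3))
    + (y.1 : ℂ) ^ 3 * (c4 * (c * PB y.2) ^ 4)
  have hTc : Continuous T := by fun_prop
  let V : ℝ × PX → ℂ := fun y => PA y.2 + c * y.1 * PB y.2
  have hVc : Continuous V := by fun_prop
  let Q : ℝ × PX → ℂ := fun y => ∑ n ∈ Finset.range 5, (y.1 : ℂ) ^ n * q n y.2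
  have hQc : Continuous Q := by
    refine continuous_finsetSum _ fun n _ => ?_
    have := hqc n
    fun_prop
  have hK : IsCompact ((Set.Icc (0:ℝ) 1) ×ˢ (Set.univ : Set PX)) := isCompact_Icc.prod isCompact_univ
  obtain ⟨KT, hKT⟩ := hK.exists_bound_of_continuousOn hTc.continuousOn
  obtain ⟨KV, hKV⟩ := hK.exists_bound_of_continuousOn hVc.continuousOn
  obtain ⟨KQ, hKQ⟩ := hK.exists_bound_of_continuousOn hQc.continuousOn
  let z0 : PX := 0
  have hKT0 : 0 ≤ KT := (norm_nonneg _).trans (hKT (0, z0) (by simp))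
  have hKV0 : 0 ≤ KV := (norm_nonneg _).trans (hKV (0, z0) (by simp))
  have hKQ0 : 0 ≤ KQ := (norm_nonneg _).trans (hKQ (0, z0) (by simp))
  set D := C * KV ^ 5 + KT with hD
  have hD0 : 0 ≤ D := by positivity
  refine ⟨D * (D + 2 * KQ) + ((∫ z, ‖q 3 z‖ ^ 2) + ∫ z, ‖q 4 z‖ ^ 2),
    min 1 (δ / (KV + 1)), by positivity, fun ε h0 h1 => ?_⟩
  have hε1 : ε < 1 := h1.trans_le (min_le_left _ _)
  have hεδ : ε * (KV + 1) < δ := by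
    rw [← lt_div_iff₀ (by positivity)]; exact h1.trans_le (min_le_right _ _)
  have hmem : ∀ z : PX, (ε, z) ∈ ((Set.Icc (0:ℝ) 1) ×ˢ (Set.univ : Set PX)) := fun z =>
    ⟨⟨h0.le, hε1.le⟩, trivial⟩
  let F : PX → ℂ := fun z => 1 + (ε : ℂ) * PA z + (c : ℂ) * (ε : ℂ) ^ 2 * PB z
  -- pointwise estimates
  have hpt : ∀ z, ‖F z ^ (s : ℂ) - Q (ε, z)‖ ≤ D * ε ^ 5 := by
    intro z
    have hV := hKV _ (hmem z)
    have hT := hKT _ (hmem z)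
    have hu : ‖(ε : ℂ) * V (ε, z)‖ ≤ ε * KV := by
      rw [norm_mul, Complex.norm_real, Real.norm_of_nonneg h0.le]
      gcongr
    have h5 := ht ((ε : ℂ) * V (ε, z)) (by nlinarith)
    have hF : 1 + (ε : ℂ) * V (ε, z) = F z := by simp only [V, F]; ring
    rw [hF] at h5
    set u := (ε : ℂ) * V (ε, z) with hu_def
    have hsplit : F z ^ (s : ℂ) - Q (ε, z) =
        (F z ^ (s : ℂ) - (1 + s * u + s * (s - 1) / 2 * u ^ 2 + c3 * u ^ 3 + c4 * u ^ 4))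
        + (ε : ℂ) ^ 5 * T (ε, z) := by
      simp only [Q, Finset.sum_range_succ, Finset.sum_range_zero, hq, qq, T, hu_def, V]
      ring
    rw [hsplit]
    refine (norm_add_le _ _).trans ?_
    have e1 : ‖(ε : ℂ) ^ 5 * T (ε, z)‖ ≤ ε ^ 5 * KT := by
      rw [norm_mul, norm_pow, Complex.norm_real, Real.norm_of_nonneg h0.le]
      gcongr
    have e2 : C * ‖u‖ ^ 5 ≤ C * (ε * KV) ^ 5 := by gcongr
    calc _ ≤ C * (ε * KV) ^ 5 + ε ^ 5 * KT := by linarith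
      _ = D * ε ^ 5 := by rw [hD]; ring
  have hε5 : ε ^ 5 ≤ 1 := pow_le_one₀ h0.le hε1.le
  have hε50 : 0 < ε ^ 5 := by positivity
  have hpt2 : ∀ z, ‖‖F z‖ ^ (2 * s) - ‖Q (ε, z)‖ ^ 2‖ ≤ D * (D + 2 * KQ) * ε ^ 5 := by
    intro z
    have e : ‖F z‖ ^ (2 * s) = ‖F z ^ (s : ℂ)‖ ^ 2 := by
      rw [Complex.norm_cpow_real, mul_comm, Real.rpow_mul (norm_nonneg _)]
      norm_cast
    rw [e, Real.norm_eq_abs, sq_sub_sq, abs_mul]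
    have a1 := hpt z
    have a2 := (abs_norm_sub_norm_le (F z ^ (s : ℂ)) (Q (ε, z))).trans a1
    have a3 := hKQ _ (hmem z)
    have a4 : |‖F z ^ (s : ℂ)‖ + ‖Q (ε, z)‖| ≤ D + 2 * KQ := by
      rw [abs_of_nonneg (by positivity)]
      have := (abs_le.1 a2).2
      nlinarith
    calc _ ≤ (D + 2 * KQ) * (D * ε ^ 5) := by gcongr
      _ = _ := by ring
  have hQs : Continuous fun z : PX => Q (ε, z) := by fun_prop
  have hFc : Continuous F := by fun_prop
  have hI1 : Integrable (fun z => ‖F z‖ ^ (2 * s)) volume :=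
    cont_integrable (hFc.norm.rpow_const fun _ => Or.inr (by positivity))
  have hI2 : Integrable (fun z => ‖Q (ε, z)‖ ^ 2) volume := cont_integrable (by fun_prop)
  have hdiff : |(∫ z, ‖F z‖ ^ (2 * s)) - ∫ z, ‖Q (ε, z)‖ ^ 2| ≤ D * (D + 2 * KQ) * ε ^ 5 := by
    rw [← integral_sub hI1 hI2]
    have := norm_integral_le_of_norm_le_const (μ := (volume : Measure PX))
      (Filter.Eventually.of_forall hpt2)
    simpa using this
  have hQint : ∫ z, ‖Q (ε, z)‖ ^ 2 = 1 + ε ^ 2 * (∫ z, ‖q 1 z‖ ^ 2) + ε ^ 4 * (∫ z, ‖q 2 z‖ ^ 2)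
      + ε ^ 6 * (∫ z, ‖q 3 z‖ ^ 2) + ε ^ 8 * (∫ z, ‖q 4 z‖ ^ 2) := by
    have := ortho (fun n z => (ε : ℂ) ^ n * q n z) (fun n => by have := hqc n; fun_prop)
      (fun n z t => by simp only [hq, qq_shift]; ring) 5
    simp only [Q]
    rw [this]
    simp only [norm_mul, mul_pow, norm_pow, Complex.norm_real, Real.norm_of_nonneg h0.le,
      integral_const_mul, Finset.sum_range_succ, Finset.sum_range_zero]
    have q0 : ∀ z, q 0 z = 1 := fun z => by simp only [hq, qq]
    simp only [q0]
    simp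
    ring
  have p3 : 0 ≤ ∫ z, ‖q 3 z‖ ^ 2 := integral_nonneg fun z => by positivity
  have p4 : 0 ≤ ∫ z, ‖q 4 z‖ ^ 2 := integral_nonneg fun z => by positivity
  have b3 : ε ^ 6 * (∫ z, ‖q 3 z‖ ^ 2) ≤ ε ^ 5 * (∫ z, ‖q 3 z‖ ^ 2) :=
    mul_le_mul_of_nonneg_right (pow_le_pow_of_le_one h0.le hε1.le (by norm_num)) p3
  have b4 : ε ^ 8 * (∫ z, ‖q 4 z‖ ^ 2) ≤ ε ^ 5 * (∫ z, ‖q 4 z‖ ^ 2) :=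
    mul_le_mul_of_nonneg_right (pow_le_pow_of_le_one h0.le hε1.le (by norm_num)) p4
  have bb3 : 0 ≤ ε ^ 6 * (∫ z, ‖q 3 z‖ ^ 2) := by positivity
  have bb4 : 0 ≤ ε ^ 8 * (∫ z, ‖q 4 z‖ ^ 2) := by positivity
  have hq1 : ∀ z, q 1 z = s * PA z := fun z => by simp only [hq, qq]
  have hq2 : ∀ z, q 2 z = s * c * PB z + s * (s - 1) / 2 * PA z ^ 2 := fun z => by
    simp only [hq, qq]
  simp only [hq1, hq2] at hQint
  rw [hQint] at hdiff
  change |(∫ z, ‖F z‖ ^ (2 * s)) - _| ≤ _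
  rw [abs_le] at hdiff ⊢
  constructor <;> nlinarith [hdiff.1, hdiff.2]

lemma int_cross : ∫ z : PX, ((fourier 1 (z 0) : ℂ) * (starRingEnd ℂ) (fourier 1 (z 1))).re = 0 := by
  set h : PX → ℝ := fun z => ((fourier 1 (z 0) : ℂ) * (starRingEnd ℂ) (fourier 1 (z 1))).re with hh
  let t : PX := ![((1 / 2 : ℝ) : AddCircle (1:ℝ)), 0]
  have h2 := integral_add_right_eq_self (μ := (volume : Measure PX)) h t
  have hf : (fourier 1 (((1 / 2 : ℝ)) : AddCircle (1:ℝ)) : ℂ) = -1 := by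
    rw [fourier_coe_apply, ← Complex.exp_pi_mul_I]
    congr 1
    push_cast
    field_simp
  have h3 : ∀ z, h (z + t) = - h z := by
    intro z
    simp only [hh, Pi.add_apply, t, Matrix.cons_val_zero, Matrix.cons_val_one, add_zero,
      fourier_one_add, hf]
    simp
    try ring
  simp only [h3, integral_neg] at h2
  linarith

lemma alg (a b : ℂ) (ha : ‖a‖ = 1) (hb : ‖b‖ = 1) :
    ‖(a + b) ^ 2‖ ^ 2 - ‖(a + b) ^ 2 - 2 * (a * b)‖ ^ 2 = 4 + 8 * (a * (starRingEnd ℂ) b).re := by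
  have e : ∀ w : ℂ, (((‖w‖ ^ 2 : ℝ)) : ℂ) = w * (starRingEnd ℂ) w := fun w => by
    rw [Complex.mul_conj, Complex.normSq_eq_norm_sq]
  have h1 : a * (starRingEnd ℂ) a = 1 := by rw [← e, ha]; simp
  have h2 : b * (starRingEnd ℂ) b = 1 := by rw [← e, hb]; simp
  apply Complex.ofReal_injective
  rw [Complex.ofReal_sub, e, e]
  have h3 : ((8 * (a * (starRingEnd ℂ) b).re : ℝ) : ℂ)
      = 4 * (a * (starRingEnd ℂ) b + (starRingEnd ℂ) a * b) := by
    rw [Complex.ofReal_mul, Complex.re_eq_add_conj]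
    simp
    ring
  rw [Complex.ofReal_add, h3]
  simp only [map_sub, map_mul, map_add, map_pow, Complex.conj_ofNat, Complex.ofReal_ofNat]
  set ac := (starRingEnd ℂ) a
  set bc := (starRingEnd ℂ) b
  linear_combination (2 * b * ac + 2 * a * bc + 4 * b * bc) * h1
    + (2 * a * bc + 2 * ac * b + 4) * h2

lemma gap (s : ℝ) :
    (∫ z, ‖(s : ℂ) * (0 : ℝ) * PB z + (s : ℂ) * (s - 1) / 2 * PA z ^ 2‖ ^ 2)
    - (∫ z, ‖(s : ℂ) * (1 - s : ℝ) * PB z + (s : ℂ) * (s - 1) / 2 * PA z ^ 2‖ ^ 2)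
    = (s * (s - 1)) ^ 2 := by
  have hA := contA
  have hB := contB
  rw [← integral_sub (cont_integrable (by fun_prop)) (cont_integrable (by fun_prop))]
  have key : ∀ z : PX,
      ‖(s : ℂ) * (0 : ℝ) * PB z + (s : ℂ) * (s - 1) / 2 * PA z ^ 2‖ ^ 2
      - ‖(s : ℂ) * (1 - s : ℝ) * PB z + (s : ℂ) * (s - 1) / 2 * PA z ^ 2‖ ^ 2
      = (s * (s - 1)) ^ 2 + 2 * (s * (s - 1)) ^ 2 *
        ((fourier 1 (z 0) : ℂ) * (starRingEnd ℂ) (fourier 1 (z 1))).re := by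
    intro z
    have h := alg (fourier 1 (z 0)) (fourier 1 (z 1)) (by rw [fourier_apply]; exact Circle.norm_coe _)
      (by rw [fourier_apply]; exact Circle.norm_coe _)
    have e1 : (s : ℂ) * (0 : ℝ) * PB z + (s : ℂ) * (s - 1) / 2 * PA z ^ 2
        = ((s * (s - 1) / 2 : ℝ) : ℂ) * PA z ^ 2 := by push_cast; ring
    have e2 : (s : ℂ) * (1 - s : ℝ) * PB z + (s : ℂ) * (s - 1) / 2 * PA z ^ 2
        = ((s * (s - 1) / 2 : ℝ) : ℂ) * (PA z ^ 2 - 2 * PB z) := by push_cast; ring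
    rw [e1, e2, norm_mul, norm_mul, mul_pow, mul_pow, Complex.norm_real, Real.norm_eq_abs, sq_abs]
    simp only [PA, PB] at *
    linear_combination (s * (s - 1) / 2) ^ 2 * h
  simp only [key]
  rw [integral_add (integrable_const _) (cont_integrable (by fun_prop)), integral_const_mul,
    int_cross]
  simp

/-- Lemma 2.4, first part: for `1 ≤ p < ∞`, `p ≠ 2` and `c_p = 1 - p/2`, one has
`‖1 + ε(z₁+z₂) + c_p ε² z₁z₂‖_p < ‖1 + ε(z₁+z₂)‖_p` for all sufficiently small `ε > 0`. -/
theorem plane_lemma (p : ℝ≥0∞) (hp1 : 1 ≤ p) (hptop : p ≠ ∞) (hp2 : p ≠ 2) :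
    ∃ ε₀ : ℝ, 0 < ε₀ ∧ ∀ ε : ℝ, 0 < ε → ε < ε₀ →
      eLpNorm (fun z : Fin 2 → AddCircle (1 : ℝ) =>
          1 + (ε : ℂ) * (fourier 1 (z 0) + fourier 1 (z 1))
            + ((1 - p.toReal / 2 : ℝ) : ℂ) * (ε : ℂ) ^ 2
              * (fourier 1 (z 0) * fourier 1 (z 1))) p volume
        < eLpNorm (fun z : Fin 2 → AddCircle (1 : ℝ) =>
            1 + (ε : ℂ) * (fourier 1 (z 0) + fourier 1 (z 1))) p volume := by
  have hp0 : p ≠ 0 := (zero_lt_one.trans_le hp1).ne'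
  have hr0 : 0 < p.toReal := ENNReal.toReal_pos hp0 hptop
  have hr2 : p.toReal ≠ 2 := by
    intro h
    apply hp2
    rw [← ENNReal.ofReal_toReal hptop, h]; simp
  set s := p.toReal / 2 with hs
  have hrs : p.toReal = 2 * s := by rw [hs]; ring
  have hs0 : 0 < s := by positivity
  have hs1 : s - 1 ≠ 0 := by
    intro h; apply hr2; linarith
  obtain ⟨M1, δ1, hδ1, H1⟩ := asymp s (1 - s) hs0.le
  obtain ⟨M2, δ2, hδ2, H2⟩ := asymp s 0 hs0.le
  have hgap := gap s
  have hd : 0 < (s * (s - 1)) ^ 2 := by positivity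
  set d := (s * (s - 1)) ^ 2
  refine ⟨min (min δ1 δ2) (d / (|M1 + M2| + 1)), by positivity, fun ε h0 h1 => ?_⟩
  have a1 := H1 ε h0 (h1.trans_le ((min_le_left _ _).trans (min_le_left _ _)))
  have a2 := H2 ε h0 (h1.trans_le ((min_le_left _ _).trans (min_le_right _ _)))
  have a3 : ε * (|M1 + M2| + 1) < d := by
    rw [← lt_div_iff₀ (by positivity)]; exact h1.trans_le (min_le_right _ _)
  have a4 : ε * (M1 + M2) < d := by nlinarith [le_abs_self (M1 + M2)]
  have a5 : (M1 + M2) * ε ^ 5 < d * ε ^ 4 := by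
    have : 0 < ε ^ 4 := by positivity
    nlinarith
  have hA := contA
  have hB := contB
  have hlt : (∫ z, ‖1 + (ε : ℂ) * PA z + ((1 - s : ℝ) : ℂ) * (ε : ℂ) ^ 2 * PB z‖ ^ (2 * s))
      < ∫ z, ‖1 + (ε : ℂ) * PA z‖ ^ (2 * s) := by
    have e : ∀ z, (1 + (ε : ℂ) * PA z + ((0 : ℝ) : ℂ) * (ε : ℂ) ^ 2 * PB z)
        = 1 + (ε : ℂ) * PA z := fun z => by simp
    simp only [e] at a2
    rw [abs_le] at a1 a2
    nlinarith [a1.2, a2.1]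
  have mem : ∀ f : PX → ℂ, Continuous f → MemLp f p volume := fun f hf => by
    exact hf.memLp_of_hasCompactSupport (HasCompactSupport.of_compactSpace _)
  have m1 := (mem (fun z => 1 + (ε : ℂ) * PA z + ((1 - s : ℝ) : ℂ) * (ε : ℂ) ^ 2 * PB z)
    (by fun_prop)).eLpNorm_eq_integral_rpow_norm hp0 hptop
  have m2 := (mem (fun z => 1 + (ε : ℂ) * PA z)
    (by fun_prop)).eLpNorm_eq_integral_rpow_norm hp0 hptop
  change eLpNorm (fun z => 1 + (ε : ℂ) * PA z + ((1 - s : ℝ) : ℂ) * (ε : ℂ) ^ 2 * PB z) p volume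
    < eLpNorm (fun z => 1 + (ε : ℂ) * PA z) p volume
  rw [m1, m2, hrs]
  have n1 : 0 ≤ ∫ z, ‖1 + (ε : ℂ) * PA z + ((1 - s : ℝ) : ℂ) * (ε : ℂ) ^ 2 * PB z‖ ^ (2 * s) :=
    integral_nonneg fun z => by positivity
  rw [ENNReal.ofReal_lt_ofReal_iff (Real.rpow_pos_of_pos (n1.trans_lt hlt) _)]
  exact Real.rpow_lt_rpow n1 hlt (by positivity)

end
end

section
/- For the supremum norms over (z₁, z₂) ∈ 𝕋² one has ‖1 + z₁ + z₂ − z₁z₂‖_∞ = 2√2, and in particular ‖1 + z₁ + z₂ − z₁z₂‖_∞ < ‖1 + z₁ + z₂‖_∞ = 3. -/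
noncomputable section

/-- Lemma 2.4, second part: the sup norms over the two-dimensional torus satisfy
`‖1 + z₁ + z₂ - z₁z₂‖_∞ = 2√2 < 3 = ‖1 + z₁ + z₂‖_∞`. -/
theorem sup_norm_corner :
    sSup {r : ℝ | ∃ z₁ z₂ : ℂ, ‖z₁‖ = 1 ∧ ‖z₂‖ = 1 ∧ r = ‖1 + z₁ + z₂ - z₁ * z₂‖}
        = 2 * Real.sqrt 2 ∧
    sSup {r : ℝ | ∃ z₁ z₂ : ℂ, ‖z₁‖ = 1 ∧ ‖z₂‖ = 1 ∧ r = ‖1 + z₁ + z₂‖} = 3 ∧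
    2 * Real.sqrt 2 < 3 := by
  have hs : Real.sqrt 2 ^ 2 = 2 := Real.sq_sqrt (by norm_num)
  have hs0 : 0 ≤ Real.sqrt 2 := Real.sqrt_nonneg 2
  refine ⟨?_, ?_, ?_⟩
  · apply IsGreatest.csSup_eq
    constructor
    · refine ⟨Complex.I, Complex.I, by simp, by simp, ?_⟩
      have h : (1 + Complex.I + Complex.I - Complex.I * Complex.I : ℂ) = 2 * (1 + Complex.I) := by
        rw [Complex.I_mul_I]; ring
      have h2 : ‖(1 + Complex.I : ℂ)‖ ^ 2 = 2 := by
        rw [← Complex.normSq_eq_norm_sq, Complex.normSq_apply]; norm_num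
      have h3 : Real.sqrt 2 = ‖(1 + Complex.I : ℂ)‖ := by
        rw [← h2, Real.sqrt_sq (norm_nonneg _)]
      rw [h, norm_mul, h3, Complex.norm_two]
    · rintro r ⟨z, w, hz, hw, rfl⟩
      have h1 : ‖1 + z + w - z * w‖ ≤ ‖1 + z‖ + ‖1 - z‖ := by
        calc ‖1 + z + w - z * w‖ = ‖(1 + z) + w * (1 - z)‖ := by ring_nf
          _ ≤ ‖1 + z‖ + ‖w * (1 - z)‖ := norm_add_le _ _
          _ = _ := by rw [norm_mul, hw, one_mul]
      have h2 := parallelogram_law_with_norm ℝ (1 : ℂ) z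
      rw [hz, norm_one] at h2
      refine h1.trans (abs_le_of_sq_le_sq' ?_ (by positivity)).2
      nlinarith [sq_nonneg (‖1 + z‖ - ‖1 - z‖)]
  · apply IsGreatest.csSup_eq
    constructor
    · exact ⟨1, 1, by simp, by simp, by norm_num⟩
    · rintro r ⟨z, w, hz, hw, rfl⟩
      have := norm_add₃_le (a := (1 : ℂ)) (b := z) (c := w)
      rw [hz, hw, norm_one] at this
      linarith
  · nlinarith

end
end

section
/- Let d ≥ 1 be an integer and fix any α ∈ ℤ^d. Then there exists ε₀ > 0 such that for every 0 < ε < ε₀ one has the strict inequality ‖d + ∑_{j=1}^d z_j − ε z^α‖_∞ < ‖d + ∑_{j=1}^d z_j‖_∞, where the norms are supremum norms over z ∈ 𝕋^d (and the right-hand side equals 2d). -/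
noncomputable section

lemma aux_pow (z : ℂ) (hz : ‖z‖ = 1) (n : ℕ) : ‖z ^ n - 1‖ ≤ n * ‖z - 1‖ := by
  induction n with
  | zero => simp
  | succ n ih =>
    have h : z ^ (n+1) - 1 = z ^ n * (z - 1) + (z ^ n - 1) := by ring
    rw [h]
    refine (norm_add_le _ _).trans ?_
    rw [norm_mul, norm_pow, hz]
    push_cast
    linarith [one_pow (M := ℝ) n, show (1:ℝ)^n * ‖z-1‖ = ‖z-1‖ by simp]

lemma aux_zpow (z : ℂ) (hz : ‖z‖ = 1) (n : ℤ) : ‖z ^ n - 1‖ ≤ |(n:ℝ)| * ‖z - 1‖ := by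
  have hz0 : z ≠ 0 := by
    rintro rfl
    simp at hz
  obtain ⟨m, rfl | rfl⟩ := n.eq_nat_or_neg
  · simpa using aux_pow z hz m
  · have h : z ^ (-(m:ℤ)) - 1 = - ((z ^ m)⁻¹ * (z ^ m - 1)) := by
      rw [zpow_neg, zpow_natCast]
      field_simp
      ring
    rw [h, norm_neg, norm_mul, norm_inv, norm_pow, hz]
    simpa using aux_pow z hz m

lemma aux_prod {ι : Type*} (s : Finset ι) (f : ι → ℂ) (hf : ∀ j, ‖f j‖ = 1) :
    ‖∏ j ∈ s, f j - 1‖ ≤ ∑ j ∈ s, ‖f j - 1‖ := by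
  classical
  induction s using Finset.induction_on with
  | empty => simp
  | insert a s ha ih =>
    rw [Finset.prod_insert ha, Finset.sum_insert ha]
    have h : f a * ∏ j ∈ s, f j - 1 = f a * (∏ j ∈ s, f j - 1) + (f a - 1) := by ring
    rw [h]
    refine (norm_add_le _ _).trans ?_
    rw [norm_mul, hf]
    linarith

lemma aux_main (d : ℕ) (hd : 1 ≤ d) (α : Fin d → ℤ) (K : ℝ)
    (hK : K = d + 2 * d * ∑ j, |(α j : ℝ)|) (ε : ℝ) (hε : 0 < ε)
    (hε' : ε * (1 + K ^ 2) < 1) (z : Fin d → ℂ) (hz : ∀ j, ‖z j‖ = 1) :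
    ‖(d : ℂ) + ∑ j, z j - (ε : ℂ) * ∏ j, z j ^ α j‖ ^ 2 ≤ 4 * d ^ 2 - 3 * d * ε := by
  have hd1 : (1:ℝ) ≤ d := by exact_mod_cast hd
  set S := ∑ j, z j with hS
  set p := ∏ j, z j ^ α j with hp
  set s := √(∑ j, ‖z j - 1‖ ^ 2) with hs
  have hs0 : 0 ≤ s := Real.sqrt_nonneg _
  have hs2 : s ^ 2 = ∑ j, ‖z j - 1‖ ^ 2 := Real.sq_sqrt (by positivity)
  have hzs : ∀ j, ‖z j - 1‖ ≤ s := fun j => by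
    apply Real.le_sqrt_of_sq_le
    exact Finset.single_le_sum (f := fun j => ‖z j - 1‖ ^ 2) (fun i _ => by positivity)
      (Finset.mem_univ j)
  have hpn : ‖p‖ = 1 := by
    rw [hp, norm_prod]
    exact Finset.prod_eq_one fun j _ => by rw [norm_zpow, hz, one_zpow]
  have hp1 : ‖p - 1‖ ≤ (∑ j, |(α j : ℝ)|) * s := by
    refine (aux_prod _ _ fun j => by rw [norm_zpow, hz, one_zpow]).trans ?_
    rw [Finset.sum_mul]
    refine Finset.sum_le_sum fun j _ => (aux_zpow _ (hz j) _).trans ?_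
    exact mul_le_mul_of_nonneg_left (hzs j) (abs_nonneg _)
  have hSd : ‖S - d‖ ≤ d * s := by
    have : S - d = ∑ j, (z j - 1) := by simp [hS]
    rw [this]
    refine (norm_sum_le _ _).trans ((Finset.sum_le_sum fun j _ => hzs j).trans ?_)
    simp
  have hSn : ‖S‖ ≤ d := by
    refine (norm_sum_le _ _).trans ?_
    simp [hz]
  have hSre : S.re = d - s ^ 2 / 2 := by
    have h : ∀ j, ‖z j - 1‖ ^ 2 = 2 - 2 * (z j).re := fun j => by
      have h1 : ‖z j‖ ^ 2 = 1 := by rw [hz]; norm_num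
      rw [Complex.sq_norm, Complex.normSq_apply] at *
      simp
      nlinarith
    rw [hs2, Finset.sum_congr rfl fun j _ => h j, hS, Complex.re_sum, Finset.sum_sub_distrib,
      ← Finset.mul_sum]
    simp
    ring
  have hw : ‖(d:ℂ) + S‖ ^ 2 ≤ 4 * d ^ 2 - d * s ^ 2 := by
    have h1 : ‖S‖ ^ 2 ≤ (d:ℝ) ^ 2 := by gcongr
    rw [Complex.sq_norm, Complex.normSq_apply] at *
    simp
    nlinarith
  have hre : 2 * d - K * s ≤ (((d:ℂ) + S) * (starRingEnd ℂ) p).re := by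
    have h1 : ((d:ℂ) + S) * (starRingEnd ℂ) p
        = 2 * d + ((S - d) * (starRingEnd ℂ) p + 2 * d * (starRingEnd ℂ) (p - 1)) := by
      simp
      ring
    have h2 : ‖(S - d) * (starRingEnd ℂ) p + 2 * d * (starRingEnd ℂ) (p - 1)‖ ≤ K * s := by
      refine (norm_add_le _ _).trans ?_
      rw [norm_mul, norm_mul, Complex.norm_conj, Complex.norm_conj, hpn, hK]
      have : ‖(2 * d : ℂ)‖ = 2 * d := by simp
      rw [this]
      nlinarith
    rw [h1, Complex.add_re]
    have h3 := (abs_le.1 ((Complex.abs_re_le_norm _).trans h2)).1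
    have h4 : (2 * d : ℂ).re = 2 * d := by simp
    rw [h4]
    linarith
  have hexp : ‖(d : ℂ) + S - (ε : ℂ) * p‖ ^ 2
      = ‖(d:ℂ) + S‖ ^ 2 - 2 * ε * (((d:ℂ) + S) * (starRingEnd ℂ) p).re + ε ^ 2 := by
    have h1 : ‖p‖ ^ 2 = 1 := by rw [hpn]; norm_num
    rw [Complex.sq_norm, Complex.normSq_apply] at h1
    rw [Complex.sq_norm, Complex.sq_norm, Complex.normSq_apply, Complex.normSq_apply]
    simp
    linear_combination ε ^ 2 * h1
  rw [hexp]
  have h1 := mul_le_mul_of_nonneg_left hre hε.le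
  have h2 := mul_le_mul_of_nonneg_right hd1 (sq_nonneg s)
  have h3 := mul_le_mul_of_nonneg_left hε'.le hε.le
  have h4 := mul_le_mul_of_nonneg_left hd1 hε.le
  nlinarith [sq_nonneg (ε * K - s)]

/-- Lemma 2.7: for any `α ∈ ℤ^d`, the sup norms over the torus satisfy
`‖d + ∑ z_j - ε z^α‖_∞ < ‖d + ∑ z_j‖_∞ = 2d` for all sufficiently small `ε > 0`. -/
theorem sup_norm_cone_lemma (d : ℕ) (hd : 1 ≤ d) (α : Fin d → ℤ) :
    sSup {r : ℝ | ∃ z : Fin d → ℂ, (∀ j, ‖z j‖ = 1) ∧ r = ‖(d : ℂ) + ∑ j, z j‖}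
        = 2 * d ∧
    ∃ ε₀ : ℝ, 0 < ε₀ ∧ ∀ ε : ℝ, 0 < ε → ε < ε₀ →
      sSup {r : ℝ | ∃ z : Fin d → ℂ, (∀ j, ‖z j‖ = 1) ∧
          r = ‖(d : ℂ) + ∑ j, z j - (ε : ℂ) * ∏ j, z j ^ α j‖}
        < sSup {r : ℝ | ∃ z : Fin d → ℂ, (∀ j, ‖z j‖ = 1) ∧
            r = ‖(d : ℂ) + ∑ j, z j‖} := by
  have hd1 : (1:ℝ) ≤ d := by exact_mod_cast hd
  have hsup : sSup {r : ℝ | ∃ z : Fin d → ℂ, (∀ j, ‖z j‖ = 1) ∧ r = ‖(d : ℂ) + ∑ j, z j‖}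
        = 2 * d := by
    apply IsGreatest.csSup_eq
    constructor
    · refine ⟨fun _ => 1, by simp, ?_⟩
      have : (d:ℂ) + ∑ j : Fin d, (1:ℂ) = ((2 * d : ℝ) : ℂ) := by
        simp
        ring
      rw [this, Complex.norm_real, Real.norm_of_nonneg (by positivity)]
    · rintro r ⟨z, hz, rfl⟩
      have h1 : ‖∑ j, z j‖ ≤ d := by
        refine (norm_sum_le _ _).trans ?_
        simp [hz]
      have h2 := norm_add_le (d:ℂ) (∑ j, z j)
      rw [Complex.norm_natCast] at h2
      linarith
  refine ⟨hsup, ?_⟩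
  rw [hsup]
  obtain ⟨K, hK⟩ : ∃ K : ℝ, K = d + 2 * d * ∑ j, |(α j : ℝ)| := ⟨_, rfl⟩
  have hpos : 0 < 1 + K ^ 2 := by positivity
  refine ⟨1 / (1 + K ^ 2), by positivity, fun ε hε hlt => ?_⟩
  have hε' : ε * (1 + K ^ 2) < 1 := (lt_div_iff₀ hpos).1 hlt
  have hlt2 : √(4 * d ^ 2 - 3 * d * ε) < 2 * d := by
    rw [Real.sqrt_lt' (by positivity)]
    have : 0 < (d:ℝ) * ε := by positivity
    nlinarith
  refine lt_of_le_of_lt (csSup_le ⟨_, fun _ => 1, by simp, rfl⟩ ?_) hlt2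
  rintro r ⟨z, hz, rfl⟩
  exact Real.le_sqrt_of_sq_le (aux_main d hd α K hK ε hε hε' z hz)

end
end

section
/- Fix 1 ≤ p < ∞ and an integer d ≥ 1. A nonempty subset Γ of ℕ_0^d is a contractive projection set for H^p(𝕋^d) if and only if ∫_{𝕋^d} |f(z)|^{p−2} f(z) · conj(z^λ) dm_d(z) = 0 for every analytic polynomial f(z) = ∑_{γ ∈ Γ₀} a_γ z^γ with Γ₀ a finite subset of Γ, and every λ ∈ (Λ(Γ) ∩ ℕ_0^d) ∖ Γ. (Here the integrand is interpreted as 0 at the points where f vanishes.) -/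
open MeasureTheory
open scoped Classical ENNReal

noncomputable section

/-- The `d`-dimensional torus, modelled as `d` copies of `ℝ/ℤ`,
whose product `volume` measure is the normalized Haar measure. -/
abbrev Torus (d : ℕ) := Fin d → AddCircle (1 : ℝ)

/-- The character `z ↦ z^α` on the torus. -/
def torusChar {d : ℕ} (α : Fin d → ℤ) (x : Torus d) : ℂ :=
  ∏ j, fourier (α j) (x j)

/-- The trigonometric polynomial with frequencies in `F` and coefficients `a`. -/
def trigPoly {d : ℕ} (F : Finset (Fin d → ℤ)) (a : (Fin d → ℤ) → ℂ) (x : Torus d) : ℂ :=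
  ∑ α ∈ F, a α * torusChar α x

/-- The set `ℕ₀^d` of multi-indices with nonnegative entries. -/
def NN (d : ℕ) : Set (Fin d → ℤ) := {α | ∀ j, 0 ≤ α j}

/-- `Λ` is a coset in `ℤ^d`, i.e. a translate of a subgroup. -/
def IsCoset {d : ℕ} (Λ : Set (Fin d → ℤ)) : Prop :=
  ∃ (x : Fin d → ℤ) (H : AddSubgroup (Fin d → ℤ)),
    Λ = (x + ·) '' (H : Set (Fin d → ℤ))

/-- `Λ` is a contractive projection set for `L^p(𝕋^d)`:
the projection onto frequencies in `Λ` is contractive on trigonometric polynomials. -/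
def IsContractiveLp (d : ℕ) (p : ℝ≥0∞) (Λ : Set (Fin d → ℤ)) : Prop :=
  ∀ (F : Finset (Fin d → ℤ)) (a : (Fin d → ℤ) → ℂ),
    eLpNorm (trigPoly (F.filter (· ∈ Λ)) a) p volume ≤ eLpNorm (trigPoly F a) p volume

/-- `Γ` is a contractive projection set for `H^p(𝕋^d)`:
the projection onto frequencies in `Γ` is contractive on analytic polynomials. -/
def IsContractiveHp (d : ℕ) (p : ℝ≥0∞) (Γ : Set (Fin d → ℤ)) : Prop :=
  ∀ F : Finset (Fin d → ℤ), ↑F ⊆ NN d → ∀ a : (Fin d → ℤ) → ℂ,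
    eLpNorm (trigPoly (F.filter (· ∈ Γ)) a) p volume ≤ eLpNorm (trigPoly F a) p volume

/-- `Γ` has dimension `k`: the subgroup generated by the differences `γ - γ₀` has rank `k`. -/
def HasDim {d : ℕ} (Γ : Set (Fin d → ℤ)) (k : ℕ) : Prop :=
  ∀ γ₀ ∈ Γ, Module.finrank ℤ (Submodule.span ℤ ((· - γ₀) '' Γ)) = k

/-- `H^p(𝕋^d)` enjoys the contractive restriction property of dimension `k`:
every `k`-dimensional contractive projection set for `H^p(𝕋^d)` is the restriction
of a coset in `ℤ^d` to `ℕ₀^d`. -/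
def ContractiveRestrictionProperty (d : ℕ) (p : ℝ≥0∞) (k : ℕ) : Prop :=
  ∀ Γ : Set (Fin d → ℤ), Γ.Nonempty → Γ ⊆ NN d → HasDim Γ k → IsContractiveHp d p Γ →
    ∃ Λ : Set (Fin d → ℤ), IsCoset Λ ∧ Γ = Λ ∩ NN d

/-- The coset `Λ(Γ)` in `ℤ^d` generated by `Γ`. -/
def cosetGen {d : ℕ} (Γ : Set (Fin d → ℤ)) : Set (Fin d → ℤ) :=
  ⋃ γ₀ ∈ Γ, (γ₀ + ·) '' (AddSubgroup.closure ((· - γ₀) '' Γ) : Set (Fin d → ℤ))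

/-- The `n`-extension `E_n(Γ)`: all points of `Λ(Γ) ∩ ℕ₀^d` at distance at most `n` from `Γ`. -/
def Eext {d : ℕ} (n : ℕ) (Γ : Set (Fin d → ℤ)) : Set (Fin d → ℤ) :=
  {lam | lam ∈ cosetGen Γ ∩ NN d ∧ ∃ γ ∈ Γ, ∃ m : (Fin d → ℤ) →₀ ℤ,
    (↑m.support : Set (Fin d → ℤ)) ⊆ Γ \ {γ} ∧
    lam = γ + ∑ α ∈ m.support, m α • (α - γ) ∧
    (∑ α ∈ m.support, max (m α) 0) ≤ (n : ℤ) ∧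
    (∑ α ∈ m.support, max (-(m α)) 0) ≤ (n : ℤ)}

/-- Iterated `n`-extensions `E_n^k(Γ)`. -/
def EextIter {d : ℕ} (n : ℕ) : ℕ → Set (Fin d → ℤ) → Set (Fin d → ℤ)
  | 0, Γ => Eext n Γ
  | (k + 1), Γ => Eext n (EextIter n k Γ)

/-- The `n`-completion `E_n^∞(Γ)`. -/
def EextInf {d : ℕ} (n : ℕ) (Γ : Set (Fin d → ℤ)) : Set (Fin d → ℤ) :=
  ⋃ k, EextIter n k Γ

namespace HpAux

lemma torusChar_eq {d : ℕ} (α : Fin d → ℤ) (x : Torus d) :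
    torusChar α x = (AddCircle.toCircle (∑ j, α j • x j) : ℂ) := by
  unfold torusChar
  have h : ∀ s : Finset (Fin d), (∏ j ∈ s, (fourier (α j) (x j) : ℂ)) =
      (AddCircle.toCircle (∑ j ∈ s, α j • x j) : ℂ) := by
    intro s
    induction s using Finset.induction_on with
    | empty => simp
    | insert i s hi ih =>
      rw [Finset.prod_insert hi, Finset.sum_insert hi, ih, AddCircle.toCircle_add, fourier_apply]
      simp
  exact h _

lemma norm_torusChar {d : ℕ} (α : Fin d → ℤ) (x : Torus d) : ‖torusChar α x‖ = 1 := by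
  rw [torusChar_eq]; exact Circle.norm_coe _

lemma torusChar_add {d : ℕ} (α : Fin d → ℤ) (x y : Torus d) :
    torusChar α (x + y) = torusChar α x * torusChar α y := by
  simp only [torusChar_eq, Pi.add_apply, smul_add, Finset.sum_add_distrib,
    AddCircle.toCircle_add, Circle.coe_mul]

lemma torusChar_add_freq {d : ℕ} (α β : Fin d → ℤ) (x : Torus d) :
    torusChar (α + β) x = torusChar α x * torusChar β x := by
  simp only [torusChar_eq, Pi.add_apply, add_smul, Finset.sum_add_distrib,
    AddCircle.toCircle_add, Circle.coe_mul]

@[fun_prop]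
lemma continuous_torusChar {d : ℕ} (α : Fin d → ℤ) : Continuous (torusChar α) := by
  unfold torusChar
  fun_prop

@[fun_prop]
lemma continuous_trigPoly {d : ℕ} (F : Finset (Fin d → ℤ)) (a : (Fin d → ℤ) → ℂ) :
    Continuous (trigPoly F a) := by
  unfold trigPoly
  fun_prop

/-- The duality map. -/
def phi (r : ℝ) (v : ℂ) : ℂ := if v = 0 then 0 else ((‖v‖ ^ (r - 2) : ℝ) : ℂ) * v

lemma norm_phi_le (r : ℝ) (v : ℂ) : ‖phi r v‖ ≤ ‖v‖ ^ (r - 1) := by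
  unfold phi
  split_ifs with h
  · simpa using by positivity
  · have hv : 0 < ‖v‖ := norm_pos_iff.mpr h
    rw [norm_mul, Complex.norm_real, Real.norm_of_nonneg (by positivity)]
    rw [← Real.rpow_add_one hv.ne']
    apply le_of_eq; congr 1; ring

lemma measurable_phi (r : ℝ) : Measurable (phi r) := by
  unfold phi
  refine Measurable.ite (measurableSet_singleton 0) measurable_const ?_
  fun_prop

lemma continuousAt_phi (r : ℝ) {v : ℂ} (hv : v ≠ 0) : ContinuousAt (phi r) v := by
  have h : (fun v : ℂ => ((‖v‖ ^ (r - 2) : ℝ) : ℂ) * v) =ᶠ[nhds v] phi r := by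
    filter_upwards [isOpen_ne.mem_nhds hv] with w hw
    simp only [phi, if_neg (show ¬ w = 0 from hw)]
  refine ContinuousAt.congr ?_ h
  refine ContinuousAt.mul ?_ continuousAt_id
  refine Complex.continuous_ofReal.continuousAt.comp ?_
  exact ContinuousAt.rpow_const continuous_norm.continuousAt (Or.inl (by simpa using hv))

lemma phi_mul (r : ℝ) (c v : ℂ) (hc : ‖c‖ = 1) : phi r (c * v) = c * phi r v := by
  have hc0 : c ≠ 0 := by rintro rfl; simp at hc
  unfold phi
  by_cases h : v = 0
  · simp [h]
  · simp [h, hc0, hc]; ring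

lemma key_ineq (r : ℝ) (hr : 1 ≤ r) (u v : ℂ) :
    ‖v‖ ^ r + r * ((starRingEnd ℂ) (phi r v) * (u - v)).re ≤ ‖u‖ ^ r := by
  by_cases h : v = 0
  · subst h
    simp [phi, Real.zero_rpow (by linarith : r ≠ 0)]
    positivity
  have hv : 0 < ‖v‖ := norm_pos_iff.mpr h
  have hb := one_add_mul_self_le_rpow_one_add (s := ‖u‖ / ‖v‖ - 1)
    (by have : 0 ≤ ‖u‖ / ‖v‖ := by positivity
        linarith) hr
  rw [show 1 + (‖u‖ / ‖v‖ - 1) = ‖u‖ / ‖v‖ by ring, Real.div_rpow (by positivity) (by positivity),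
    le_div_iff₀ (by positivity)] at hb
  refine le_trans ?_ hb
  have e1 : ‖v‖ ^ r = ‖v‖ ^ (r - 2) * ‖v‖ ^ 2 := by
    rw [← Real.rpow_natCast, ← Real.rpow_add hv]; congr 1; push_cast; ring
  have e2 : ((starRingEnd ℂ) (phi r v) * (u - v)).re =
      ‖v‖ ^ (r - 2) * (((starRingEnd ℂ) v * u).re - ‖v‖ ^ 2) := by
    rw [phi, if_neg h, map_mul, Complex.conj_ofReal, mul_assoc, Complex.re_ofReal_mul, mul_sub,
      Complex.sub_re, ← Complex.normSq_eq_norm_sq]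
    congr 2
    rw [mul_comm, Complex.mul_conj]; simp
  have e3 : ((starRingEnd ℂ) v * u).re ≤ ‖v‖ * ‖u‖ := by
    refine (Complex.re_le_norm _).trans ?_
    rw [norm_mul, Complex.norm_conj]
  rw [e2, e1]
  have e4 : (1 + r * (‖u‖ / ‖v‖ - 1)) * (‖v‖ ^ (r - 2) * ‖v‖ ^ 2) =
      ‖v‖ ^ (r - 2) * ‖v‖ ^ 2 + r * (‖v‖ ^ (r - 2) * (‖v‖ * ‖u‖ - ‖v‖ ^ 2)) := by
    field_simp
  rw [e4]
  gcongr

lemma integrable_cont {d : ℕ} {E : Type*} [NormedAddCommGroup E] {f : Torus d → E}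
    (hf : Continuous f) : Integrable f volume :=
  hf.integrable_of_hasCompactSupport (HasCompactSupport.of_compactSpace f)

lemma bdd_cont {d : ℕ} {f : Torus d → ℂ} (hf : Continuous f) : ∃ C, 0 ≤ C ∧ ∀ x, ‖f x‖ ≤ C := by
  obtain ⟨C, hC⟩ := isCompact_univ.exists_bound_of_continuousOn hf.continuousOn
  exact ⟨max C 0, le_max_right _ _, fun x => (hC x trivial).trans (le_max_left _ _)⟩

lemma integrable_phi {d : ℕ} (r : ℝ) (hr : 1 ≤ r) {f g : Torus d → ℂ} (hf : Continuous f)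
    (hg : Continuous g) : Integrable (fun x => phi r (f x) * g x) volume := by
  obtain ⟨C, hC0, hC⟩ := bdd_cont hf
  obtain ⟨D, hD0, hD⟩ := bdd_cont hg
  refine Integrable.of_bound
    (((measurable_phi r).comp hf.measurable).mul hg.measurable).aestronglyMeasurable
    (C ^ (r - 1) * D) ?_
  refine Filter.Eventually.of_forall fun x => ?_
  simp only [norm_mul]
  have := norm_phi_le r (f x)
  have h2 : ‖f x‖ ^ (r - 1) ≤ C ^ (r - 1) :=
    Real.rpow_le_rpow (norm_nonneg _) (hC x) (by linarith)
  exact mul_le_mul (this.trans h2) (hD x) (norm_nonneg _) (by positivity)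

lemma eLpNorm_le_iff {d : ℕ} (p : ℝ≥0∞) (hp1 : 1 ≤ p) (hp2 : p ≠ ∞) {f g : Torus d → ℂ}
    (hf : Continuous f) (hg : Continuous g) :
    eLpNorm f p volume ≤ eLpNorm g p volume ↔
      ∫ x, ‖f x‖ ^ p.toReal ≤ ∫ x, ‖g x‖ ^ p.toReal := by
  have hp0 : p ≠ 0 := by rintro rfl; simp at hp1
  have hr : 0 < p.toReal := ENNReal.toReal_pos hp0 hp2
  have hm : ∀ {h : Torus d → ℂ}, Continuous h → MemLp h p volume := by
    intro h hh
    obtain ⟨C, hC0, hC⟩ := bdd_cont hh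
    exact MemLp.of_bound hh.aestronglyMeasurable C (Filter.Eventually.of_forall hC)
  have hn : ∀ h : Torus d → ℂ, 0 ≤ ∫ x, ‖h x‖ ^ p.toReal := fun h =>
    integral_nonneg fun x => by positivity
  rw [(hm hf).eLpNorm_eq_integral_rpow_norm hp0 hp2, (hm hg).eLpNorm_eq_integral_rpow_norm hp0 hp2,
    ENNReal.ofReal_le_ofReal_iff (Real.rpow_nonneg (hn g) _),
    Real.rpow_le_rpow_iff (hn f) (hn g) (by positivity)]

/-! ### Zero sets of trigonometric polynomials -/

lemma finite_zeros {ι : Type*} (F : Finset ι) (c : ι → ℂ) (n : ι → ℤ)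
    (hn : Set.InjOn n F) (i : ι) (hi : i ∈ F) (hc : c i ≠ 0) :
    {t : AddCircle (1 : ℝ) | ∑ j ∈ F, c j * (AddCircle.toCircle t : ℂ) ^ n j = 0}.Finite := by
  obtain ⟨N, hN⟩ : ∃ N : ℕ, ∀ j ∈ F, 0 ≤ n j + N := by
    refine ⟨∑ j ∈ F, (n j).natAbs, fun j hj => ?_⟩
    have := Finset.single_le_sum (f := fun j => (n j).natAbs) (fun _ _ => Nat.zero_le _) hj
    omega
  let P : Polynomial ℂ := ∑ j ∈ F, Polynomial.monomial (n j + N).toNat (c j)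
  have hP : P ≠ 0 := by
    intro h
    have h2 : P.coeff (n i + N).toNat = 0 := by rw [h]; simp
    simp only [P, Polynomial.finsetSum_coeff, Polynomial.coeff_monomial] at h2
    rw [Finset.sum_eq_single i] at h2
    · simp [hc] at h2
    · intro b hb hbi
      rw [if_neg]
      intro h3
      apply hbi
      apply hn hb hi
      have := hN b hb
      have := hN i hi
      omega
    · exact fun h => absurd hi h
  have hinj : Function.Injective (fun t : AddCircle (1 : ℝ) => (AddCircle.toCircle t : ℂ)) :=
    Subtype.val_injective.comp (AddCircle.injective_toCircle one_ne_zero)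
  refine Set.Finite.subset (Set.Finite.preimage hinj.injOn (P.roots.toFinset.finite_toSet)) ?_
  intro t ht
  simp only [Set.mem_preimage, Finset.mem_coe, Multiset.mem_toFinset, Polynomial.mem_roots hP,
    Polynomial.IsRoot.def, P, Polynomial.eval_finsetSum, Polynomial.eval_monomial]
  have ht' : ∑ j ∈ F, c j * (AddCircle.toCircle t : ℂ) ^ n j = 0 := ht
  have hz : (AddCircle.toCircle t : ℂ) ≠ 0 := Circle.coe_ne_zero _
  calc ∑ j ∈ F, c j * (AddCircle.toCircle t : ℂ) ^ (n j + N).toNat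
      = (AddCircle.toCircle t : ℂ) ^ N * ∑ j ∈ F, c j * (AddCircle.toCircle t : ℂ) ^ n j := by
        rw [Finset.mul_sum]
        refine Finset.sum_congr rfl fun j hj => ?_
        rw [← zpow_natCast, Int.toNat_of_nonneg (hN j hj), zpow_add₀ hz, zpow_natCast]
        ring
    _ = 0 := by rw [ht', mul_zero]

lemma exists_sep {d : ℕ} (F : Finset (Fin d → ℤ)) :
    ∃ θ : Fin d → ℤ, Set.InjOn (fun α : Fin d → ℤ => ∑ j, α j * θ j) F := by
  let L : (Fin d → ℤ) → MvPolynomial (Fin d) ℤ := fun β =>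
    ∑ j, MvPolynomial.C (β j) * MvPolynomial.X j
  have hev : ∀ β θ, MvPolynomial.eval θ (L β) = ∑ j, β j * θ j := by
    intro β θ; simp [L]
  have hL : ∀ β, β ≠ 0 → L β ≠ 0 := by
    intro β hβ h
    apply hβ
    funext i
    have := hev β (Pi.single i 1)
    rw [h] at this
    simpa [Pi.single_apply] using this.symm
  let P := ∏ q ∈ F.offDiag, L (q.1 - q.2)
  have hP : P ≠ 0 := by
    rw [Finset.prod_ne_zero_iff]
    intro q hq
    rw [Finset.mem_offDiag] at hq
    exact hL _ (sub_ne_zero.mpr hq.2.2)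
  obtain ⟨θ, hθ⟩ : ∃ θ, MvPolynomial.eval θ P ≠ 0 := by
    by_contra! h
    exact hP (MvPolynomial.funext fun x => by simpa using h x)
  refine ⟨θ, fun α hα β hβ hab => ?_⟩
  by_contra hne
  apply hθ
  rw [map_prod]
  refine Finset.prod_eq_zero (i := (α, β)) (by simp; exact ⟨hα, hβ, hne⟩) ?_
  rw [hev]
  simp only [Pi.sub_apply, sub_mul, Finset.sum_sub_distrib]
  exact sub_eq_zero.mpr hab

lemma nullSingleton_circle : NullSingletonClass (volume : Measure (AddCircle (1 : ℝ))) := by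
  constructor
  intro x
  rw [← nonpos_iff_eq_zero]
  have hlim : Filter.Tendsto (fun ε : ℝ => ENNReal.ofReal (min 1 (2 * ε)))
      (nhdsWithin 0 (Set.Ioi 0)) (nhds (ENNReal.ofReal (min 1 (2 * 0)))) := by
    refine Filter.Tendsto.mono_left (Continuous.tendsto ?_ 0) nhdsWithin_le_nhds
    exact ENNReal.continuous_ofReal.comp (by fun_prop)
  rw [show ENNReal.ofReal (min 1 (2 * 0)) = 0 by simp] at hlim
  refine ge_of_tendsto hlim ?_
  filter_upwards [self_mem_nhdsWithin] with ε hε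
  rw [← AddCircle.volume_closedBall (T := (1 : ℝ)) (x := x)]
  exact measure_mono (Set.singleton_subset_iff.mpr (Metric.mem_closedBall_self (le_of_lt hε)))

lemma ae_ne_zero {d : ℕ} (F : Finset (Fin d → ℤ)) (a : (Fin d → ℤ) → ℂ) (i : Fin d → ℤ)
    (hi : i ∈ F) (hc : a i ≠ 0) : ∀ᵐ z : Torus d, trigPoly F a z ≠ 0 := by
  obtain ⟨θ, hθ⟩ := exists_sep F
  let sh : AddCircle (1 : ℝ) → Torus d := fun t j => θ j • t
  have hsh : Continuous sh := by
    refine continuous_pi fun j => ?_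
    exact continuous_zsmul (θ j)
  let S : Set (AddCircle (1 : ℝ) × Torus d) := {q | trigPoly F a (sh q.1 + q.2) ≠ 0}
  have hcont : Continuous fun q : AddCircle (1 : ℝ) × Torus d => trigPoly F a (sh q.1 + q.2) :=
    (continuous_trigPoly F a).comp ((hsh.comp continuous_fst).add continuous_snd)
  have hS : MeasurableSet S := (isOpen_ne.preimage hcont).measurableSet
  have h1 : ∀ z : Torus d, ∀ᵐ t : AddCircle (1 : ℝ), (t, z) ∈ S := by
    intro z
    have hfin := finite_zeros F (fun α => a α * torusChar α z) (fun α => ∑ j, α j * θ j) hθ i hi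
      (mul_ne_zero hc (by rw [← norm_ne_zero_iff, norm_torusChar]; norm_num))
    have := nullSingleton_circle
    have h0 := hfin.measure_zero (volume : Measure (AddCircle (1 : ℝ)))
    rw [ae_iff]
    refine measure_mono_null ?_ h0
    intro t ht
    simp only [S, Set.mem_ofPred_eq, not_not] at ht ⊢
    rw [← ht]
    unfold trigPoly
    refine Finset.sum_congr rfl fun α _ => ?_
    rw [torusChar_add]
    have : torusChar α (sh t) = (AddCircle.toCircle t : ℂ) ^ (∑ j, α j * θ j) := by
      rw [torusChar_eq, ← Circle.coe_zpow, ← AddCircle.toCircle_zsmul, Finset.sum_smul]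
      simp only [sh, mul_smul]
    rw [this]; ring
  have h2 : ∀ᵐ q : Torus d × AddCircle (1 : ℝ) ∂(volume.prod volume), q.swap ∈ S := by
    exact (Measure.ae_prod_mem_iff_ae_ae_mem (s := Prod.swap ⁻¹' S) (measurable_swap hS)).mpr
      (Filter.Eventually.of_forall h1)
  have h3 : ∀ᵐ q : AddCircle (1 : ℝ) × Torus d ∂(volume.prod volume), q ∈ S := by
    rw [← Measure.prod_swap]
    exact (ae_map_iff (p := fun q => q ∈ S) measurable_swap.aemeasurable hS).mpr h2
  rw [Measure.ae_prod_mem_iff_ae_ae_mem hS] at h3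
  obtain ⟨t, ht⟩ := h3.exists
  have hmp := measurePreserving_add_left (volume : Measure (Torus d)) (sh t)
  have hm : MeasurableSet {z : Torus d | trigPoly F a z ≠ 0} :=
    (isOpen_ne.preimage (continuous_trigPoly F a)).measurableSet
  rw [← hmp.map_eq, ae_map_iff hmp.aemeasurable hm]
  exact ht

/-! ### Separation by characters -/

lemma exists_torus_sep {d : ℕ} (H : AddSubgroup (Fin d → ℤ)) (β : Fin d → ℤ) (hβ : β ∉ H) :
    ∃ x : Torus d, (∀ h ∈ H, torusChar h x = 1) ∧ torusChar β x ≠ 1 := by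
  have hne : (QuotientAddGroup.mk' H β) ≠ 0 := by
    simpa [QuotientAddGroup.eq_zero_iff] using hβ
  obtain ⟨c, hc⟩ := CharacterModule.exists_character_apply_ne_zero_of_ne_zero hne
  let ι : AddCircle (1 : ℚ) →+ AddCircle (1 : ℝ) :=
    QuotientAddGroup.map _ _ (Rat.castHom ℝ).toAddMonoidHom (by
      rw [AddSubgroup.zmultiples_le]
      exact AddSubgroup.mem_comap.mpr (by simp))
  have hι : ∀ y, ι y = 0 → y = 0 := by
    intro y
    induction y using QuotientAddGroup.induction_on with
    | H q =>
      intro h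
      have h' : (((q : ℝ)) : AddCircle (1 : ℝ)) = 0 := h
      rw [AddCircle.coe_eq_zero_iff] at h'
      obtain ⟨n, hn⟩ := h'
      refine (AddCircle.coe_eq_zero_iff (1 : ℚ)).mpr ⟨n, ?_⟩
      have : ((n • (1 : ℚ) : ℚ) : ℝ) = (q : ℝ) := by rw [← hn]; simp
      exact_mod_cast this
  let ψ : (Fin d → ℤ) →+ AddCircle (1 : ℝ) :=
    ι.comp ((show (_ →+ AddCircle (1 : ℚ)) from c).comp (QuotientAddGroup.mk' H))
  let x : Torus d := fun j => ψ (Pi.single j 1)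
  have hx : ∀ α : Fin d → ℤ, ∑ j, α j • x j = ψ α := by
    intro α
    simp only [x, ← map_zsmul, ← map_sum]
    congr 1
    funext k
    simp [Finset.sum_apply, Pi.single_apply]
  refine ⟨x, fun h hh => ?_, fun h => ?_⟩
  · rw [torusChar_eq, hx]
    have : QuotientAddGroup.mk' H h = 0 := by simpa [QuotientAddGroup.eq_zero_iff] using hh
    have h0 : ψ h = 0 := by
      change ι (c (QuotientAddGroup.mk' H h)) = 0
      rw [this, map_zero, map_zero]
    rw [h0, AddCircle.toCircle_zero, Circle.coe_one]
  · rw [torusChar_eq, hx] at h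
    have h1 : AddCircle.toCircle (ψ β) = AddCircle.toCircle (0 : AddCircle (1 : ℝ)) := by
      rw [AddCircle.toCircle_zero]; exact Circle.ext (by simpa using h)
    have h2 := AddCircle.injective_toCircle one_ne_zero h1
    exact hc (hι _ h2)

lemma integral_phi_eq_zero_of_notMem {d : ℕ} (r : ℝ) (F : Finset (Fin d → ℤ))
    (a : (Fin d → ℤ) → ℂ) (H : AddSubgroup (Fin d → ℤ)) (γ lam : Fin d → ℤ)
    (hF : ∀ α ∈ F, α - γ ∈ H) (hl : lam - γ ∉ H) :
    ∫ z : Torus d, phi r (trigPoly F a z) * (starRingEnd ℂ) (torusChar lam z) = 0 := by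
  obtain ⟨x, hx, hxl⟩ := exists_torus_sep H _ hl
  set I := ∫ z : Torus d, phi r (trigPoly F a z) * (starRingEnd ℂ) (torusChar lam z) with hI
  have hsplit : ∀ α : Fin d → ℤ, torusChar α x = torusChar (α - γ) x * torusChar γ x := by
    intro α; rw [← torusChar_add_freq, sub_add_cancel]
  have h1 : I = (starRingEnd ℂ) (torusChar (lam - γ) x) * I := by
    conv_lhs => rw [hI, ← integral_add_left_eq_self _ x]
    rw [hI, ← integral_const_mul]
    refine integral_congr_ae (Filter.Eventually.of_forall fun z => ?_)
    have e1 : trigPoly F a (x + z) = torusChar γ x * trigPoly F a z := by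
      unfold trigPoly
      rw [Finset.mul_sum]
      refine Finset.sum_congr rfl fun α hα => ?_
      rw [torusChar_add, hsplit, hx _ (hF α hα)]; ring
    have e2 : torusChar γ x * (starRingEnd ℂ) (torusChar γ x) = 1 := by
      rw [Complex.mul_conj, Complex.normSq_eq_norm_sq, norm_torusChar]; simp
    simp only
    rw [e1, phi_mul _ _ _ (norm_torusChar _ _), torusChar_add, hsplit lam]
    simp only [map_mul]
    linear_combination (phi r (trigPoly F a z) * (starRingEnd ℂ) (torusChar (lam - γ) x) *
      (starRingEnd ℂ) (torusChar lam z)) * e2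
  by_contra hne
  apply hxl
  have h2 : (starRingEnd ℂ) (torusChar (lam - γ) x) = 1 :=
    mul_right_cancel₀ hne (by rw [one_mul]; exact h1.symm)
  have := congrArg (starRingEnd ℂ) h2
  simpa using this

lemma integrand_eq {d : ℕ} (r : ℝ) (F : Finset (Fin d → ℤ)) (a : (Fin d → ℤ) → ℂ)
    (lam : Fin d → ℤ) (z : Torus d) :
    (if trigPoly F a z = 0 then 0 else
      ((‖trigPoly F a z‖ ^ (r - 2) : ℝ) : ℂ) * trigPoly F a z *
        (starRingEnd ℂ) (torusChar lam z)) =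
    phi r (trigPoly F a z) * (starRingEnd ℂ) (torusChar lam z) := by
  unfold phi
  split_ifs <;> simp

lemma re_integral_conj {d : ℕ} {k : Torus d → ℂ} (hk : Integrable k volume) (c : ℂ) :
    ∫ z, ((starRingEnd ℂ) (k z) * c).re = ((starRingEnd ℂ) (∫ z, k z) * c).re := by
  have hi : Integrable (fun z => (starRingEnd ℂ) (k z) * c) volume := by
    refine Integrable.mul_const ?_ c
    exact (Complex.conjCLE.toContinuousLinearMap.integrable_comp hk)
  rw [← integral_conj, ← integral_mul_const]
  exact Complex.reCLM.integral_comp_comm hi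

/-- Forward direction: from contractivity to orthogonality. -/
lemma forward {d : ℕ} (r : ℝ) (hr : 1 ≤ r) (F : Finset (Fin d → ℤ)) (a : (Fin d → ℤ) → ℂ)
    (lam : Fin d → ℤ)
    (h : ∀ c : ℂ, ∫ z : Torus d, ‖trigPoly F a z‖ ^ r ≤
      ∫ z : Torus d, ‖trigPoly F a z + c * torusChar lam z‖ ^ r) :
    ∫ z : Torus d, phi r (trigPoly F a z) * (starRingEnd ℂ) (torusChar lam z) = 0 := by
  by_cases hz : ∀ i ∈ F, a i = 0
  · have : ∀ z, trigPoly F a z = 0 := fun z =>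
      Finset.sum_eq_zero fun i hi => by rw [hz i hi, zero_mul]
    simp [this, phi]
  push Not at hz
  obtain ⟨i, hi, hai⟩ := hz
  have hae := ae_ne_zero F a i hi hai
  set f := trigPoly F a with hf
  have hfc : Continuous f := continuous_trigPoly F a
  set I := ∫ z : Torus d, phi r (f z) * (starRingEnd ℂ) (torusChar lam z) with hI
  let ε : ℕ → ℝ := fun n => 1 / ((n : ℝ) + 1)
  have hε0 : ∀ n, 0 < ε n := fun n => by positivity
  have hε1 : ∀ n, ε n ≤ 1 := fun n => by
    have : (0 : ℝ) ≤ n := n.cast_nonneg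
    exact (div_le_one (by positivity)).mpr (by linarith)
  have hεt : Filter.Tendsto ε Filter.atTop (nhds 0) := tendsto_one_div_add_atTop_nhds_zero_nat
  let g : ℕ → Torus d → ℂ := fun n z => f z + ((ε n : ℂ) * (-I)) * torusChar lam z
  have hgc : ∀ n, Continuous (g n) := fun n => by
    simp only [g]; fun_prop
  have hcc : Continuous fun z : Torus d => (starRingEnd ℂ) (torusChar lam z) :=
    Complex.continuous_conj.comp (continuous_torusChar lam)
  let A : ℕ → ℂ := fun n => ∫ z : Torus d, phi r (g n z) * (starRingEnd ℂ) (torusChar lam z)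
  have hA : Filter.Tendsto A Filter.atTop (nhds I) := by
    obtain ⟨C, hC0, hC⟩ := bdd_cont hfc
    refine tendsto_integral_of_dominated_convergence (fun _ => (C + ‖I‖) ^ (r - 1))
      (fun n => (integrable_phi r hr (hgc n) hcc).aestronglyMeasurable)
      (integrable_const _) ?_ ?_
    · intro n
      refine Filter.Eventually.of_forall fun z => ?_
      rw [norm_mul, Complex.norm_conj, norm_torusChar, mul_one]
      refine (norm_phi_le r _).trans ?_
      refine Real.rpow_le_rpow (norm_nonneg _) ?_ (by linarith)
      refine (norm_add_le _ _).trans (add_le_add (hC z) ?_)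
      rw [norm_mul, norm_torusChar, mul_one, norm_mul, norm_neg, Complex.norm_real,
        Real.norm_of_nonneg (hε0 n).le]
      exact mul_le_of_le_one_left (norm_nonneg _) (hε1 n)
    · filter_upwards [hae] with z hz
      refine Filter.Tendsto.mul_const _ ?_
      refine (continuousAt_phi r hz).tendsto.comp ?_
      have h0 : Filter.Tendsto (fun n => f z + ((ε n : ℂ) * (-I)) * torusChar lam z) Filter.atTop
          (nhds (f z + (((0 : ℝ) : ℂ) * (-I)) * torusChar lam z)) :=
        tendsto_const_nhds.add
          ((((Complex.continuous_ofReal.tendsto _).comp hεt).mul_const _).mul_const _)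
      simp only [Complex.ofReal_zero, zero_mul, add_zero] at h0
      exact h0
  have hre : ∀ n, 0 ≤ ((starRingEnd ℂ) (A n) * (-I)).re := by
    intro n
    have hint := integrable_phi r hr (hgc n) hcc
    have h1 := h ((ε n : ℂ) * (-I))
    have hrp : ∀ {u : Torus d → ℂ}, Continuous u → Integrable (fun z => ‖u z‖ ^ r) volume :=
      fun hu => integrable_cont (hu.norm.rpow_const fun _ => Or.inr (by linarith))
    have h2 : ∀ z, ‖g n z‖ ^ r - (r * ε n) * ((starRingEnd ℂ)
        (phi r (g n z) * (starRingEnd ℂ) (torusChar lam z)) * (-I)).re ≤ ‖f z‖ ^ r := by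
      intro z
      have h3 := key_ineq r hr (f z) (g n z)
      have h4 : (starRingEnd ℂ) (phi r (g n z)) * (f z - g n z) =
          ((-ε n : ℝ) : ℂ) * ((starRingEnd ℂ)
            (phi r (g n z) * (starRingEnd ℂ) (torusChar lam z)) * (-I)) := by
        simp only [g, map_mul, Complex.conj_conj]; push_cast; ring
      rw [h4, Complex.re_ofReal_mul] at h3
      linarith
    have hint2 : Integrable (fun z => ((starRingEnd ℂ)
        (phi r (g n z) * (starRingEnd ℂ) (torusChar lam z)) * (-I)).re) volume :=
      Complex.reCLM.integrable_comp
        ((Complex.conjCLE.toContinuousLinearMap.integrable_comp hint).mul_const (-I))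
    have h5 := integral_mono ((hrp (hgc n)).sub (hint2.const_mul (r * ε n))) (hrp hfc) h2
    simp only [Pi.sub_apply] at h5
    rw [integral_sub (hrp (hgc n)) (hint2.const_mul (r * ε n)), integral_const_mul,
      re_integral_conj hint] at h5
    have h6 : 0 ≤ r * ε n * ((starRingEnd ℂ) (A n) * (-I)).re := by
      have h1' : ∫ z, ‖f z‖ ^ r ≤ ∫ z, ‖g n z‖ ^ r := h1
      simp only [A]
      linarith
    exact nonneg_of_mul_nonneg_right h6 (mul_pos (by linarith) (hε0 n))
  have hlim : Filter.Tendsto (fun n => ((starRingEnd ℂ) (A n) * (-I)).re) Filter.atTop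
      (nhds ((starRingEnd ℂ) I * (-I)).re) :=
    (Complex.continuous_re.tendsto _).comp
      (((Complex.continuous_conj.tendsto _).comp hA).mul_const _)
  have h7 := ge_of_tendsto' hlim hre
  have h8 : ((starRingEnd ℂ) I * (-I)).re = -Complex.normSq I := by
    rw [mul_neg, mul_comm, Complex.mul_conj]; simp
  rw [h8] at h7
  have h9 := Complex.normSq_nonneg I
  exact Complex.normSq_eq_zero.mp (by linarith)

/-- Backward direction. -/
lemma backward {d : ℕ} (r : ℝ) (hr : 1 ≤ r) (F : Finset (Fin d → ℤ)) (a : (Fin d → ℤ) → ℂ)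
    (Γ : Set (Fin d → ℤ))
    (h : ∀ lam ∈ F, lam ∉ Γ → ∫ z : Torus d, phi r (trigPoly (F.filter (· ∈ Γ)) a z) *
      (starRingEnd ℂ) (torusChar lam z) = 0) :
    ∫ z : Torus d, ‖trigPoly (F.filter (· ∈ Γ)) a z‖ ^ r ≤ ∫ z : Torus d, ‖trigPoly F a z‖ ^ r := by
  set g := trigPoly (F.filter (· ∈ Γ)) a with hg
  have hgc : Continuous g := continuous_trigPoly _ a
  have hrp : ∀ {u : Torus d → ℂ}, Continuous u → Integrable (fun z => ‖u z‖ ^ r) volume :=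
    fun hu => integrable_cont (hu.norm.rpow_const fun _ => Or.inr (by linarith))
  have hcc : ∀ lam : Fin d → ℤ, Continuous fun z : Torus d => (starRingEnd ℂ) (torusChar lam z) :=
    fun lam => Complex.continuous_conj.comp (continuous_torusChar lam)
  have hint := fun lam => integrable_phi r hr hgc (hcc lam)
  have hre : ∀ z, ((starRingEnd ℂ) (phi r (g z)) * (trigPoly F a z - g z)).re =
      ∑ lam ∈ F.filter (¬ · ∈ Γ), ((starRingEnd ℂ)
        (phi r (g z) * (starRingEnd ℂ) (torusChar lam z)) * a lam).re := by
    intro z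
    have : trigPoly F a z - g z = ∑ lam ∈ F.filter (¬ · ∈ Γ), a lam * torusChar lam z := by
      rw [hg]; unfold trigPoly
      rw [← Finset.sum_filter_add_sum_filter_not F (· ∈ Γ)]
      ring
    rw [this, Finset.mul_sum, Complex.re_sum]
    refine Finset.sum_congr rfl fun lam _ => ?_
    congr 1
    simp only [map_mul, Complex.conj_conj]; ring
  have hi2 : ∀ lam, Integrable (fun z => ((starRingEnd ℂ)
        (phi r (g z) * (starRingEnd ℂ) (torusChar lam z)) * a lam).re) volume := fun lam =>
    Complex.reCLM.integrable_comp
        ((Complex.conjCLE.toContinuousLinearMap.integrable_comp (hint lam)).mul_const (a lam))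
  have hi3 := integrable_finsetSum (F.filter (¬ · ∈ Γ)) (fun lam _ => hi2 lam)
  have hmono := integral_mono ((hrp hgc).add (hi3.const_mul r)) (hrp (continuous_trigPoly F a))
    (fun z => by
      have := key_ineq r hr (trigPoly F a z) (g z)
      rw [hre] at this
      exact this)
  simp only [Pi.add_apply] at hmono
  rw [integral_add (hrp hgc) (hi3.const_mul r), integral_const_mul,
    integral_finsetSum _ (fun lam _ => hi2 lam), Finset.sum_eq_zero] at hmono
  · simpa using hmono
  · intro lam hl
    rw [Finset.mem_filter] at hl
    rw [re_integral_conj (hint lam), h lam hl.1 hl.2]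
    simp

end HpAux

/-- Duality reformulation: `Γ` is a contractive projection set for `H^p(𝕋^d)` iff
`|f|^{p-2} f ⟂ z^λ` for every analytic polynomial `f` with frequencies in `Γ` and
every `λ ∈ (Λ(Γ) ∩ ℕ₀^d) \ Γ`. -/
theorem hp_contractive_iff_orthogonality (d : ℕ) (hd : 1 ≤ d) (p : ℝ≥0∞)
    (hp1 : 1 ≤ p) (hp2 : p ≠ ∞) (Γ : Set (Fin d → ℤ)) (hne : Γ.Nonempty) (hΓ : Γ ⊆ NN d) :
    IsContractiveHp d p Γ ↔
      ∀ F : Finset (Fin d → ℤ), ↑F ⊆ Γ → ∀ a : (Fin d → ℤ) → ℂ,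
        ∀ lam ∈ (cosetGen Γ ∩ NN d) \ Γ,
          ∫ z : Torus d,
            (if trigPoly F a z = 0 then 0 else
              ((‖trigPoly F a z‖ ^ (p.toReal - 2) : ℝ) : ℂ) * trigPoly F a z *
                (starRingEnd ℂ) (torusChar lam z)) = 0 := by
  have hr : 1 ≤ p.toReal := by
    have := ENNReal.toReal_mono hp2 hp1
    simpa using this
  simp only [HpAux.integrand_eq]
  constructor
  · intro hcon F hF a lam hlam
    refine HpAux.forward p.toReal hr F a lam fun c => ?_
    have hnot : lam ∉ F := fun h => hlam.2 (hF h)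
    have h1 := hcon (insert lam F) (by
      intro x hx
      rw [Finset.coe_insert, Set.mem_insert_iff] at hx
      rcases hx with rfl | hx
      · exact hlam.1.2
      · exact hΓ (hF hx)) (Function.update a lam c)
    have e1 : (insert lam F).filter (· ∈ Γ) = F := by
      rw [Finset.filter_insert, if_neg hlam.2, Finset.filter_true_of_mem fun x hx => hF hx]
    rw [e1, HpAux.eLpNorm_le_iff p hp1 hp2 (HpAux.continuous_trigPoly _ _)
      (HpAux.continuous_trigPoly _ _)] at h1
    have e2 : ∀ z, trigPoly F (Function.update a lam c) z = trigPoly F a z := by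
      intro z
      refine Finset.sum_congr rfl fun α hα => ?_
      rw [Function.update_of_ne (by rintro rfl; exact hnot hα)]
    have e3 : ∀ z, trigPoly (insert lam F) (Function.update a lam c) z =
        trigPoly F a z + c * torusChar lam z := by
      intro z
      rw [← e2 z]
      unfold trigPoly
      rw [Finset.sum_insert hnot, Function.update_self, add_comm]
    simpa only [e2, e3] using h1
  · intro h F hF a
    rw [HpAux.eLpNorm_le_iff p hp1 hp2 (HpAux.continuous_trigPoly _ _)
      (HpAux.continuous_trigPoly _ _)]
    refine HpAux.backward p.toReal hr F a Γ fun lam hl hlΓ => ?_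
    by_cases hc : lam ∈ cosetGen Γ
    · exact h _ (by intro x hx; exact (Finset.mem_filter.mp hx).2) a lam ⟨⟨hc, hF hl⟩, hlΓ⟩
    · obtain ⟨γ, hγ⟩ := hne
      refine HpAux.integral_phi_eq_zero_of_notMem p.toReal _ a
        (AddSubgroup.closure ((· - γ) '' Γ)) γ lam ?_ ?_
      · intro α hα
        exact AddSubgroup.subset_closure ⟨α, (Finset.mem_filter.mp hα).2, rfl⟩
      · intro hm
        apply hc
        unfold cosetGen
        refine Set.mem_biUnion hγ ⟨lam - γ, hm, ?_⟩
        simp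


end
end

section
/- Let d ≥ 1 be an integer and let T be a nonempty subset of ℕ_0^d with dim(T) = 1. Then the 1-completion of T satisfies E_1^∞(T) = Λ(T) ∩ ℕ_0^d. -/
open MeasureTheory
open scoped Classical ENNReal

noncomputable section

/-- One-dimensional core: a subset of an interval of integers which contains `0`, generates `ℤ`
and is closed under `a - b + c` inside the interval is the whole interval. -/
theorem int_core (S I : Set ℤ) (hSI : S ⊆ I) (hI : I.OrdConnected) (h0 : (0 : ℤ) ∈ S)
    (hcl : ∀ a ∈ S, ∀ b ∈ S, ∀ c ∈ S, a - b + c ∈ I → a - b + c ∈ S)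
    (hgen : (1 : ℤ) ∈ AddSubgroup.closure S) : I ⊆ S := by
  have hex : ∃ g : ℕ, 0 < g ∧ ∃ a ∈ S, ∃ b ∈ S, a - b = (g : ℤ) := by
    by_contra hcon
    have hz : S ⊆ ((⊥ : AddSubgroup ℤ) : Set ℤ) := by
      intro x hx
      by_contra hx0
      have hx0 : x ≠ 0 := fun h => hx0 (by simp [h])
      apply hcon
      rcases lt_or_gt_of_ne hx0 with h | h
      · exact ⟨x.natAbs, by omega, 0, h0, x, hx, by omega⟩
      · exact ⟨x.natAbs, by omega, x, hx, 0, h0, by omega⟩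
    have := (AddSubgroup.closure_le _).2 hz hgen
    simp at this
  obtain ⟨hgpos, a, ha, b, hb, hab⟩ := Nat.find_spec hex
  have hmin : ∀ x ∈ S, ∀ y ∈ S, x < y → ((Nat.find hex : ℕ) : ℤ) ≤ y - x := by
    intro x hx y hy hxy
    have : Nat.find hex ≤ (y - x).toNat :=
      Nat.find_min' hex ⟨by omega, y, hy, x, hx, by omega⟩
    omega
  generalize Nat.find hex = g at *
  have up : ∀ c ∈ S, c + g ∈ I → c + g ∈ S := by
    intro c hc h
    have := hcl a ha b hb c hc (by rw [hab, add_comm]; exact h)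
    rwa [hab, add_comm] at this
  have down : ∀ c ∈ S, c - g ∈ I → c - g ∈ S := by
    intro c hc h
    have e : b - a + c = c - g := by omega
    have := hcl b hb a ha c hc (by rw [e]; exact h)
    rwa [e] at this
  have ups : ∀ c ∈ S, ∀ k : ℕ, c + g * k ∈ I → c + g * k ∈ S := by
    intro c hc k
    induction k with
    | zero => intro _; simpa using hc
    | succ k ih =>
      intro h
      have hm : c + g * k ∈ I := hI.out (hSI hc) h ⟨by linarith [mul_nonneg (Int.natCast_nonneg g) (Int.natCast_nonneg k)], by push_cast; nlinarith⟩
      have e : c + (g : ℤ) * ((k + 1 : ℕ) : ℤ) = c + g * k + g := by push_cast; ring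
      rw [e] at h ⊢
      exact up _ (ih hm) h
  have downs : ∀ c ∈ S, ∀ k : ℕ, c - g * k ∈ I → c - g * k ∈ S := by
    intro c hc k
    induction k with
    | zero => intro _; simpa using hc
    | succ k ih =>
      intro h
      have hm : c - g * k ∈ I := hI.out h (hSI hc) ⟨by push_cast; nlinarith, by linarith [mul_nonneg (Int.natCast_nonneg g) (Int.natCast_nonneg k)]⟩
      have e : c - (g : ℤ) * ((k + 1 : ℕ) : ℤ) = c - g * k - g := by push_cast; ring
      rw [e] at h ⊢
      exact down _ (ih hm) h
  have hg0 : (0 : ℤ) < g := by exact_mod_cast hgpos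
  have hdiv : ∀ x ∈ S, ∀ y ∈ S, x < y → (g : ℤ) ∣ y - x := by
    intro x hx y hy hxy
    have h1 := Int.emod_add_mul_ediv (y - x) g
    have h2 := Int.emod_nonneg (y - x) hg0.ne'
    have h3 := Int.emod_lt_of_pos (y - x) hg0
    have h4 : 0 ≤ (y - x) / g := Int.ediv_nonneg (by omega) hg0.le
    obtain ⟨k, hk⟩ := Int.eq_ofNat_of_zero_le h4
    rw [hk] at h1
    have h5 : 0 ≤ (g : ℤ) * k := by positivity
    have hzI : x + g * k ∈ I := hI.out (hSI hx) (hSI hy) ⟨by linarith, by linarith⟩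
    have hzS := ups x hx k hzI
    by_contra hnd
    have h6 : (y - x) % g ≠ 0 := fun h => hnd (Int.dvd_of_emod_eq_zero h)
    have := hmin _ hzS y hy (by omega)
    omega
  have hg1 : (g : ℤ) ∣ 1 := by
    have : S ⊆ (AddSubgroup.zmultiples (g : ℤ) : Set ℤ) := by
      intro x hx
      simp only [SetLike.mem_coe, Int.mem_zmultiples_iff]
      rcases lt_trichotomy x 0 with h | h | h
      · have := hdiv x hx 0 h0 h
        simpa using this
      · simp [h]
      · simpa using hdiv 0 h0 x hx h
    exact Int.mem_zmultiples_iff.1 ((AddSubgroup.closure_le _).2 this hgen)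
  have hg : (g : ℤ) = 1 := Int.eq_one_of_dvd_one hg0.le hg1
  intro x hx
  rcases le_total 0 x with h | h
  · have e : (0 : ℤ) + g * (x.toNat : ℕ) = x := by rw [hg]; omega
    have := ups 0 h0 x.toNat (by rw [e]; exact hx)
    rwa [e] at this
  · have e : (0 : ℤ) - g * ((-x).toNat : ℕ) = x := by rw [hg]; omega
    have := downs 0 h0 (-x).toNat (by rw [e]; exact hx)
    rwa [e] at this

theorem mem_cosetGen_iff {d : ℕ} {Γ : Set (Fin d → ℤ)} {γ₀ : Fin d → ℤ} (h : γ₀ ∈ Γ)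
    (x : Fin d → ℤ) :
    x ∈ cosetGen Γ ↔ x - γ₀ ∈ AddSubgroup.closure ((· - γ₀) '' Γ) := by
  constructor
  · intro hx
    simp only [cosetGen, Set.mem_iUnion, Set.mem_image] at hx
    obtain ⟨γ, hγ, y, hy, rfl⟩ := hx
    have hle : AddSubgroup.closure ((· - γ) '' Γ) ≤ AddSubgroup.closure ((· - γ₀) '' Γ) := by
      rw [AddSubgroup.closure_le]
      rintro _ ⟨z, hz, rfl⟩
      have := AddSubgroup.sub_mem _
        (AddSubgroup.subset_closure (Set.mem_image_of_mem (· - γ₀) hz))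
        (AddSubgroup.subset_closure (Set.mem_image_of_mem (· - γ₀) hγ))
      simpa using this
    have e : γ + y - γ₀ = (γ - γ₀) + y := by abel
    rw [e]
    exact AddSubgroup.add_mem _
      (AddSubgroup.subset_closure (Set.mem_image_of_mem (· - γ₀) hγ)) (hle hy)
  · intro hx
    simp only [cosetGen, Set.mem_iUnion, Set.mem_image]
    exact ⟨γ₀, h, x - γ₀, hx, by abel⟩

theorem subset_cosetGen {d : ℕ} (Γ : Set (Fin d → ℤ)) : Γ ⊆ cosetGen Γ := by
  intro x hx
  rw [mem_cosetGen_iff hx]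
  simp

theorem cosetGen_subset {d : ℕ} {Γ T : Set (Fin d → ℤ)} (h : Γ ⊆ cosetGen T) :
    cosetGen Γ ⊆ cosetGen T := by
  intro x hx
  obtain ⟨γ, hγ⟩ : Γ.Nonempty := by
    simp only [cosetGen, Set.mem_iUnion] at hx
    obtain ⟨γ, hγ, _⟩ := hx
    exact ⟨γ, hγ⟩
  obtain ⟨τ, hτ⟩ : T.Nonempty := by
    have := h hγ
    simp only [cosetGen, Set.mem_iUnion] at this
    obtain ⟨γ, hγ, _⟩ := this
    exact ⟨γ, hγ⟩
  rw [mem_cosetGen_iff hγ] at hx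
  rw [mem_cosetGen_iff hτ]
  have hγ' := (mem_cosetGen_iff hτ γ).1 (h hγ)
  have hle : AddSubgroup.closure ((· - γ) '' Γ) ≤ AddSubgroup.closure ((· - τ) '' T) := by
    rw [AddSubgroup.closure_le]
    rintro _ ⟨z, hz, rfl⟩
    have := AddSubgroup.sub_mem _ ((mem_cosetGen_iff hτ z).1 (h hz)) hγ'
    simpa using this
  have := AddSubgroup.add_mem _ (hle hx) hγ'
  simpa using this

theorem Eext_closed {d : ℕ} {Γ : Set (Fin d → ℤ)} {a b c : Fin d → ℤ} (ha : a ∈ Γ) (hb : b ∈ Γ)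
    (hc : c ∈ Γ) (h : a - b + c ∈ NN d) : a - b + c ∈ Eext 1 Γ := by
  refine ⟨⟨?_, h⟩, ?_⟩
  · rw [mem_cosetGen_iff hc]
    have := AddSubgroup.sub_mem _
        (AddSubgroup.subset_closure (Set.mem_image_of_mem (· - c) ha))
        (AddSubgroup.subset_closure (Set.mem_image_of_mem (· - c) hb))
    simpa using this
  by_cases hbc : b = c
  · subst hbc
    exact ⟨a, ha, 0, by simp, by simp, by simp, by simp⟩
  by_cases hba : b = a
  · subst hba
    exact ⟨c, hc, 0, by simp, by simp, by simp, by simp⟩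
  by_cases hac : a = c
  · subst hac
    have hs : (Finsupp.single b (-1 : ℤ)).support = {b} :=
      Finsupp.support_single_ne_zero _ (by norm_num)
    refine ⟨a, ha, Finsupp.single b (-1), ?_, ?_, ?_, ?_⟩ <;> rw [hs]
    · simp [hb, hba]
    · simp; abel
    · simp
    · simp
  · have hs : (Finsupp.single a (1 : ℤ) + Finsupp.single b (-1 : ℤ)).support = {a, b} := by
      ext x
      by_cases h1 : x = a
      · subst h1; simp [Finsupp.single_apply, hba]
      · by_cases h2 : x = b
        · subst h2; simp [Finsupp.single_apply, Ne.symm h1]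
        · simp [Finsupp.single_apply, h1, h2, Ne.symm h1, Ne.symm h2]
    have hab : a ≠ b := Ne.symm hba
    refine ⟨c, hc, Finsupp.single a 1 + Finsupp.single b (-1), ?_, ?_, ?_, ?_⟩ <;> rw [hs]
    · intro x hx
      simp only [Finset.coe_insert, Finset.coe_singleton, Set.mem_insert_iff,
        Set.mem_singleton_iff] at hx
      rcases hx with rfl | rfl
      · exact ⟨ha, hac⟩
      · exact ⟨hb, hbc⟩
    all_goals rw [Finset.sum_pair hab]
    · simp [Finsupp.single_apply, hab, hba]; abel
    · simp [Finsupp.single_apply, hab, hba]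
    · simp [Finsupp.single_apply, hab, hba]

theorem subset_Eext {d : ℕ} {Γ : Set (Fin d → ℤ)} (h : Γ ⊆ NN d) : Γ ⊆ Eext 1 Γ := by
  intro x hx
  have := Eext_closed hx hx hx (by simpa using h hx)
  simpa using this

theorem Eext_subset_NN {d n : ℕ} (Γ : Set (Fin d → ℤ)) : Eext n Γ ⊆ NN d := fun _ hx => hx.1.2

theorem EextIter_subset {d : ℕ} (n : ℕ) (T : Set (Fin d → ℤ)) (k : ℕ) :
    EextIter n k T ⊆ cosetGen T ∩ NN d := by
  induction k with
  | zero => exact fun _ hx => hx.1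
  | succ k ih =>
    exact fun _ hx => ⟨cosetGen_subset (fun _ hy => (ih hy).1) hx.1.1, hx.1.2⟩

theorem EextIter_mono {d : ℕ} (T : Set (Fin d → ℤ)) : Monotone (fun k => EextIter 1 k T) :=
  monotone_nat_of_le_succ fun k => subset_Eext fun _ hx => (EextIter_subset 1 T k hx).2

theorem EextInf_closed {d : ℕ} {T : Set (Fin d → ℤ)} {a b c : Fin d → ℤ} (ha : a ∈ EextInf 1 T)
    (hb : b ∈ EextInf 1 T) (hc : c ∈ EextInf 1 T) (h : a - b + c ∈ NN d) :
    a - b + c ∈ EextInf 1 T := by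
  simp only [EextInf, Set.mem_iUnion] at *
  obtain ⟨i, hi⟩ := ha
  obtain ⟨j, hj⟩ := hb
  obtain ⟨k, hk⟩ := hc
  refine ⟨max i (max j k) + 1, Eext_closed (EextIter_mono T ?_ hi) (EextIter_mono T ?_ hj)
    (EextIter_mono T ?_ hk) h⟩ <;> simp

/-- If `dim T = 1`, then the `1`-completion of `T` is `Λ(T) ∩ ℕ₀^d`. -/
theorem one_completion_of_dim_one (d : ℕ) (hd : 1 ≤ d) (T : Set (Fin d → ℤ))
    (hne : T.Nonempty) (hT : T ⊆ NN d) (hdim : HasDim T 1) :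
    EextInf 1 T = cosetGen T ∩ NN d := by
  apply Set.Subset.antisymm
  · exact Set.iUnion_subset fun k => EextIter_subset 1 T k
  have hTE : T ⊆ EextInf 1 T := fun x hx => Set.mem_iUnion.2 ⟨0, subset_Eext hT hx⟩
  obtain ⟨γ, hγ⟩ := hne
  have hr := hdim γ hγ
  let B := Module.finBasisOfFinrankEq ℤ (Submodule.span ℤ ((· - γ) '' T)) hr
  obtain ⟨u, hu⟩ : ∃ u, B 0 = u := ⟨_, rfl⟩
  have hu0 : (u : Fin d → ℤ) ≠ 0 := by
    rw [← hu]
    intro h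
    exact B.ne_zero 0 (Subtype.ext h)
  have hmem : ∀ x, x ∈ AddSubgroup.closure ((· - γ) '' T) → ∃ k : ℤ, x = k • (u : Fin d → ℤ) := by
    intro x hx
    rw [← Submodule.span_int_eq_addSubgroupClosure, Submodule.mem_toAddSubgroup] at hx
    refine ⟨B.repr ⟨x, hx⟩ 0, ?_⟩
    have := B.sum_repr ⟨x, hx⟩
    simp only [Finset.univ_unique, Fin.default_eq_zero, Finset.sum_singleton, hu] at this
    exact (congrArg Subtype.val this).symm
  have hucl : (u : Fin d → ℤ) ∈ AddSubgroup.closure ((· - γ) '' T) := by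
    rw [← Submodule.span_int_eq_addSubgroupClosure, Submodule.mem_toAddSubgroup]
    exact u.2
  generalize (u : Fin d → ℤ) = v at hu0 hmem hucl
  have key := int_core {k | γ + k • v ∈ EextInf 1 T} {k | γ + k • v ∈ NN d} ?_ ?_ ?_ ?_ ?_
  · rintro x ⟨hx, hxN⟩
    obtain ⟨k, hk⟩ := hmem _ ((mem_cosetGen_iff hγ x).1 hx)
    have e : x = γ + k • v := by rw [← hk]; abel
    rw [e] at hxN ⊢
    exact key hxN
  · intro k hk
    obtain ⟨i, hi⟩ := Set.mem_iUnion.1 hk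
    exact (EextIter_subset 1 T i hi).2
  · refine ⟨fun x hx y hy z hz j => ?_⟩
    have h1 := hx j
    have h2 := hy j
    obtain ⟨hz1, hz2⟩ := hz
    simp only [Pi.add_apply, Pi.smul_apply, smul_eq_mul] at *
    rcases le_total 0 (v j) with h | h <;> nlinarith
  · simpa using hTE hγ
  · intro a ha b hb c hc h
    have e : γ + (a - b + c) • v = (γ + a • v) - (γ + b • v) + (γ + c • v) := by
      rw [add_smul, sub_smul]; abel
    simp only [Set.mem_setOf_eq] at *
    rw [e] at h ⊢
    exact EextInf_closed ha hb hc h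
  · have hle : AddSubgroup.closure ((· - γ) '' T) ≤
        (AddSubgroup.closure {k : ℤ | γ + k • v ∈ EextInf 1 T}).map (zmultiplesHom _ v) := by
      rw [AddSubgroup.closure_le]
      rintro _ ⟨t, ht, rfl⟩
      obtain ⟨k, hk⟩ := hmem _ (AddSubgroup.subset_closure (Set.mem_image_of_mem (· - γ) ht))
      refine ⟨k, AddSubgroup.subset_closure ?_, ?_⟩
      · have e : γ + k • v = t := by rw [← hk]; abel
        simp only [Set.mem_setOf_eq, e]
        exact hTE ht
      · simpa using hk.symm
    obtain ⟨k, hk, hkv⟩ := hle hucl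
    have hkv : k • v = v := by simpa using hkv
    have h1 : (k - 1) • v = 0 := by rw [sub_smul, hkv]; simp
    rcases smul_eq_zero.1 h1 with h | h
    · have : k = 1 := by omega
      rwa [this] at hk
    · exact absurd h hu0

end
end
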